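/- arXiv:2111.02486 — 5 statements merged into one kernel-verified Lean document; each statement's English description precedes it below -/
import Mathlib

section
/- Let X be a real-valued random variable and ε ∈ (0,1). Then CVaR_{1−ε}(min(X,0)) = 𝟙{VaR_{1−ε}(X) ≤ 0} · ( CVaR_{1−ε}(X) − (1/ε)·E[max(X,0)] ), where 𝟙{·} is the indicator taking value 1 if the condition holds and 0 otherwise. -/
open MeasureTheory Set
open scoped Classical ENNReal

noncomputable section

/-- Value-at-risk at level `β`: `VaR_β(X) := inf { t : P[X ≤ t] ≥ β }`. -/
noncomputable def VaR {Ω : Type*} [MeasurableSpace Ω] (P : Measure Ω) (X : Ω → ℝ) (β : ℝ) : ℝ :=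
  sInf {t : ℝ | β ≤ (P {ω | X ω ≤ t}).toReal}

/-- Conditional value-at-risk at level `β`:
`CVaR_β(X) := inf_γ { γ + (1/(1−β))·E[(X − γ)⁺] }`. -/
noncomputable def CVaR {Ω : Type*} [MeasurableSpace Ω] (P : Measure Ω) (X : Ω → ℝ) (β : ℝ) : ℝ :=
  ⨅ γ : ℝ, γ + (1 - β)⁻¹ * ∫ ω, max (X ω - γ) 0 ∂P

/-!
Let `F γ = γ + ε⁻¹ E[(X - γ)⁺]` and `G γ = γ + ε⁻¹ E[(min(X,0) - γ)⁺]` be the two objectives.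
For `γ ≤ 0` the pointwise identity `(X - γ)⁺ = (min(X,0) - γ)⁺ + X⁺` gives
`F γ = G γ + ε⁻¹ E[X⁺]`, and for `γ ≥ 0` one has `G γ = γ ≥ 0 = G 0`.

If `VaR ≤ 0`, right-continuity of the distribution function gives `P[X > 0] ≤ ε`
(`le_measure_of_VaR_nonpos`), so `F γ ≥ F 0` for `γ ≥ 0`; both infima may then be taken over
`γ ≤ 0`, where the objectives differ by a constant. If `VaR > 0`, then `P[X > 0] ≥ ε`
(`measure_lt_of_VaR_pos`), hence `G γ ≥ γ - ε⁻¹ γ P[X > 0] ≥ 0` for `γ ≤ 0`, and the infimum of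
`G` is `G 0 = 0`.
-/

lemma integrable_excess {Ω : Type*} [MeasurableSpace Ω] (P : Measure Ω) [IsProbabilityMeasure P]
    {X : Ω → ℝ} (hXi : Integrable X P) (γ : ℝ) : Integrable (fun ω => max (X ω - γ) 0) P :=
  (hXi.sub (integrable_const γ)).pos_part

/-- The mean is a lower bound for the objective defining `CVaR`, since `1 ≤ ε⁻¹`. -/
lemma integral_le_objective {Ω : Type*} [MeasurableSpace Ω] (P : Measure Ω)
    [IsProbabilityMeasure P] {X : Ω → ℝ} (hXi : Integrable X P) {ε : ℝ}
    (hε : ε ∈ Set.Ioo (0 : ℝ) 1) (γ : ℝ) :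
    ∫ ω, X ω ∂P ≤ γ + ε⁻¹ * ∫ ω, max (X ω - γ) 0 ∂P := by
  have h1 : ∫ ω, (X ω - γ) ∂P ≤ ∫ ω, max (X ω - γ) 0 ∂P :=
    integral_mono (hXi.sub (integrable_const γ)) (integrable_excess P hXi γ)
      fun ω => le_max_left _ _
  have h2 : ∫ ω, (X ω - γ) ∂P = ∫ ω, X ω ∂P - γ := by
    rw [integral_sub hXi (integrable_const γ)]; simp
  have h3 : 0 ≤ ∫ ω, max (X ω - γ) 0 ∂P := integral_nonneg fun ω => le_max_right _ _
  have h4 : 1 ≤ ε⁻¹ := (one_le_inv₀ hε.1).2 hε.2.le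
  nlinarith

lemma bddBelow_objective {Ω : Type*} [MeasurableSpace Ω] (P : Measure Ω)
    [IsProbabilityMeasure P] {X : Ω → ℝ} (hXi : Integrable X P) {ε : ℝ}
    (hε : ε ∈ Set.Ioo (0 : ℝ) 1) :
    BddBelow (range fun γ : ℝ => γ + ε⁻¹ * ∫ ω, max (X ω - γ) 0 ∂P) :=
  ⟨∫ ω, X ω ∂P, by rintro _ ⟨γ, rfl⟩; exact integral_le_objective P hXi hε γ⟩

/-- This uses right-continuity of the distribution function at `0`.
The hypothesis `β < 1` makes the set in the definition nonempty. -/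
lemma le_measure_of_VaR_nonpos {Ω : Type*} [MeasurableSpace Ω] (P : Measure Ω)
    [IsProbabilityMeasure P] {X : Ω → ℝ} (hX : Measurable X) {β : ℝ} (hβ : β < 1)
    (h : VaR P X β ≤ 0) : β ≤ P.real {ω | X ω ≤ 0} := by
  have hcdf : ∀ t, (P {ω | X ω ≤ t}).toReal = ProbabilityTheory.cdf (P.map X) t := by
    intro t
    have := Measure.isProbabilityMeasure_map (μ := P) hX.aemeasurable
    rw [ProbabilityTheory.cdf_eq_real, map_measureReal_apply hX measurableSet_Iic]
    rfl
  have hne : {t : ℝ | β ≤ (P {ω | X ω ≤ t}).toReal}.Nonempty := by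
    simp only [hcdf]
    exact ((ProbabilityTheory.tendsto_cdf_atTop (P.map X)).eventually (eventually_ge_nhds hβ)).exists
  have hpos : ∀ t > 0, β ≤ ProbabilityTheory.cdf (P.map X) t := by
    intro t ht
    obtain ⟨s, hs, hst⟩ := exists_lt_of_csInf_lt hne (lt_of_le_of_lt h ht)
    rw [mem_ofPred_eq, hcdf] at hs
    exact hs.trans (ProbabilityTheory.monotone_cdf _ hst.le)
  rw [Measure.real, hcdf]
  have hc := ((ProbabilityTheory.cdf (P.map X)).right_continuous 0).tendsto.mono_left
    (nhdsWithin_mono 0 Ioi_subset_Ici_self)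
  exact ge_of_tendsto hc (Filter.eventually_of_mem self_mem_nhdsWithin hpos)

/-- If the set in the definition of `VaR` is unbounded below, its real infimum is `0`, so a
positive `VaR` is a genuine lower bound. -/
lemma measure_lt_of_VaR_pos {Ω : Type*} [MeasurableSpace Ω] (P : Measure Ω)
    {X : Ω → ℝ} {β : ℝ} (h : 0 < VaR P X β) : P.real {ω | X ω ≤ 0} < β := by
  by_contra! hc
  by_cases hb : BddBelow {t : ℝ | β ≤ (P {ω | X ω ≤ t}).toReal}
  · exact h.not_ge (csInf_le hb hc)
  · rw [VaR, Real.sInf_of_not_bddBelow hb] at h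
    exact lt_irrefl _ h

/-- Lemma: CVaR of the negative part.
For a real random variable `X` and `ε ∈ (0,1)`,
`CVaR_{1−ε}(X⁻) = 𝟙{VaR_{1−ε}(X) ≤ 0} · ( CVaR_{1−ε}(X) − (1/ε)·E[X⁺] )`. -/
theorem stmt1 {Ω : Type*} [MeasurableSpace Ω] (P : Measure Ω) [IsProbabilityMeasure P]
    (X : Ω → ℝ) (hX : Measurable X) (hXi : Integrable X P)
    (ε : ℝ) (hε : ε ∈ Set.Ioo (0 : ℝ) 1) :
    CVaR P (fun ω => min (X ω) 0) (1 - ε) =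
      (if VaR P X (1 - ε) ≤ 0 then (1 : ℝ) else 0) *
        (CVaR P X (1 - ε) - ε⁻¹ * ∫ ω, max (X ω) 0 ∂P) := by
  have hε0 : 0 < ε⁻¹ := inv_pos.2 hε.1
  have hmi : Integrable (fun ω => min (X ω) 0) P := hXi.inf (integrable_zero _ _ _)
  have hpi : Integrable (fun ω => max (X ω) 0) P := hXi.pos_part
  have hbF := bddBelow_objective P hXi hε
  have hbG := bddBelow_objective P hmi hε
  have hmeas : MeasurableSet {ω | 0 < X ω} := measurableSet_lt measurable_const hX
  have hcompl : P.real {ω | 0 < X ω} = 1 - P.real {ω | X ω ≤ 0} := by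
    rw [← probReal_compl_eq_one_sub (measurableSet_le hX measurable_const)]
    congr 1; ext ω; simp
  have hind : ∀ c : ℝ, Integrable ({ω | 0 < X ω}.indicator fun _ => c) P :=
    fun c => (integrable_const c).indicator hmeas
  have hindI : ∀ c : ℝ, ∫ ω, {ω | 0 < X ω}.indicator (fun _ => c) ω ∂P
      = c * P.real {ω | 0 < X ω} := by
    intro c
    rw [integral_indicator_const c hmeas, smul_eq_mul, mul_comm]
  have hsplit : ∀ γ ≤ 0, ∫ ω, max (X ω - γ) 0 ∂P
      = ∫ ω, max (min (X ω) 0 - γ) 0 ∂P + ∫ ω, max (X ω) 0 ∂P := by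
    intro γ hγ
    rw [← integral_add (integrable_excess P hmi γ) hpi]
    congr 1; ext ω
    rcases le_total (X ω) 0 with h | h
    · simp [h]
    · rw [min_eq_right h, max_eq_left h, max_eq_left (by linarith), max_eq_left (by linarith)]
      ring
  have hG : ∀ γ ≥ 0, ∫ ω, max (min (X ω) 0 - γ) 0 ∂P = 0 := by
    intro γ hγ
    refine integral_eq_zero_of_ae (Filter.Eventually.of_forall fun ω => ?_)
    have := min_le_right (X ω) 0
    exact max_eq_right (by linarith : min (X ω) 0 - γ ≤ 0)
  simp only [CVaR, sub_sub_cancel]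
  split_ifs with hV
  · have hp : P.real {ω | 0 < X ω} ≤ ε := by
      have := le_measure_of_VaR_nonpos P hX (by linarith [hε.1]) hV
      linarith
    have hF : ∀ γ ≥ 0, ε⁻¹ * ∫ ω, max (X ω) 0 ∂P ≤ γ + ε⁻¹ * ∫ ω, max (X ω - γ) 0 ∂P := by
      intro γ hγ
      have h1 : ∫ ω, max (X ω) 0 ∂P
          ≤ ∫ ω, (max (X ω - γ) 0 + {ω | 0 < X ω}.indicator (fun _ => γ) ω) ∂P := by
        refine integral_mono hpi ((integrable_excess P hXi γ).add (hind γ)) fun ω => ?_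
        by_cases h : 0 < X ω
        · simp only [indicator, mem_ofPred_eq, h, if_true]
          rw [max_eq_left h.le]
          linarith [le_max_left (X ω - γ) 0]
        · simp only [indicator, mem_ofPred_eq, h, if_false]
          rw [max_eq_right (not_lt.1 h)]
          linarith [le_max_right (X ω - γ) 0]
      rw [integral_add (integrable_excess P hXi γ) (hind γ), hindI] at h1
      have h2 : γ * P.real {ω | 0 < X ω} ≤ γ * ε := mul_le_mul_of_nonneg_left hp hγ
      have h3 := mul_le_mul_of_nonneg_left (h1.trans (add_le_add_right h2 _)) hε0.le
      have h4 : ε⁻¹ * (γ * ε) = γ := by field_simp [hε.1.ne']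
      linarith
    rw [one_mul]
    apply le_antisymm
    · rw [le_sub_iff_add_le]
      refine le_ciInf fun γ => ?_
      rcases le_total γ 0 with hγ | hγ
      · have := ciInf_le hbG γ
        rw [hsplit γ hγ, mul_add]
        linarith
      · have := ciInf_le hbG 0
        simp only [hG 0 le_rfl] at this
        linarith [hF γ hγ]
    · refine le_ciInf fun γ => ?_
      rcases le_total γ 0 with hγ | hγ
      · have := ciInf_le hbF γ
        simp only [hsplit γ hγ, mul_add] at this
        linarith
      · have := ciInf_le hbF 0
        simp only [sub_zero, zero_add] at this
        rw [hG γ hγ]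
        linarith
  · have hp : ε ≤ P.real {ω | 0 < X ω} := by
      have := measure_lt_of_VaR_pos P (not_le.1 hV)
      linarith
    rw [zero_mul]
    apply le_antisymm
    · have := ciInf_le hbG 0
      simp only [hG 0 le_rfl] at this
      linarith
    · refine le_ciInf fun γ => ?_
      rcases le_total γ 0 with hγ | hγ
      · have h1 : ∫ ω, {ω | 0 < X ω}.indicator (fun _ => -γ) ω ∂P
            ≤ ∫ ω, max (min (X ω) 0 - γ) 0 ∂P := by
          refine integral_mono (hind _) (integrable_excess P hmi γ) fun ω => ?_
          by_cases h : 0 < X ω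
          · simp [indicator, h, h.le]
          · simp [indicator, h]
        rw [hindI] at h1
        have h2 : -γ * ε ≤ -γ * P.real {ω | 0 < X ω} :=
          mul_le_mul_of_nonneg_left hp (by linarith)
        have h3 := mul_le_mul_of_nonneg_left (h2.trans h1) hε0.le
        have h4 : ε⁻¹ * (-γ * ε) = -γ := by field_simp [hε.1.ne']
        linarith
      · rw [hG γ hγ]; linarith

end
end

section
/- Let ε ∈ (0, 1/2], Y be a standard one-dimensional Gaussian random variable, and for δ > 0 define c_p(δ) := inf_{ε' ∈ (0,ε)} ( δ + ε·CVaR_{1−ε}(Y) − ε'·CVaR_{1−ε'}(Y) ) / (ε − ε'). Then c_p(δ) decreases to VaR_{1−ε}(Y) as δ decreases to 0; in particular, lim_{δ → 0⁺} c_p(δ) = VaR_{1−ε}(Y). -/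
/-!
Write `g s = s * CVaR_{1-s}(Y) = inf_γ (s γ + E (Y - γ)⁺)`, a concave function of `s`. The infimum
is attained at any `t` with `P (Y > t) = s` (`objective_min`), so `t` is a supergradient of `g`
at `s`. Since the Gaussian distribution function is continuous and strictly increasing, such a `t`
exists for every `s ∈ (0, 1)`, and for `s = ε` it is `q = VaR_{1-ε}(Y)`.

The supergradient inequality at `ε` gives `g ε - g ε' ≥ (ε - ε') q`, so every quotient in the
definition of `c_p(δ)` is at least `q`; hence `c_p(δ) ≥ q`, and the infima are monotone in `δ`.
Conversely, for `η > 0` take `ε' = P (Y > q + η) ∈ (0, ε)`. The supergradient inequality at `ε'`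
gives `g ε - g ε' ≤ (ε - ε') (q + η)`, whence `c_p(δ) ≤ q + η + δ / (ε - ε')`, which is less than
`q + 2 η` for small `δ`.
-/

open MeasureTheory Set ProbabilityTheory Filter
open scoped Classical ENNReal

noncomputable section

/-- The constant `c_p(δ)`, where `Y` is a standard one-dimensional Gaussian random
variable. -/
noncomputable def cpConst (δ ε : ℝ) : ℝ :=
  sInf {r : ℝ | ∃ ε' ∈ Set.Ioo (0 : ℝ) ε,
    r = (δ + ε * CVaR (gaussianReal 0 1) id (1 - ε)
          - ε' * CVaR (gaussianReal 0 1) id (1 - ε')) / (ε - ε')}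

lemma integrable_posPart (γ : ℝ) :
    Integrable (fun x : ℝ => max (x - γ) 0) (gaussianReal 0 1) := by
  have h : Integrable (fun x : ℝ => x) (gaussianReal 0 1) :=
    (memLp_id_gaussianReal (μ := 0) (v := 1) 1).integrable (by simp)
  exact (h.sub (integrable_const γ)).pos_part

lemma strictMono_cdf_gaussian : StrictMono (cdf (gaussianReal 0 1)) := by
  intro a b hab
  have := (gaussianReal_absolutelyContinuous' 0 (v := 1) one_ne_zero).isOpenPosMeasure
  have hpos : 0 < gaussianReal 0 1 (Ioc a b) :=
    ((isOpen_Ioo.measure_pos _ (nonempty_Ioo.2 hab))).trans_le (measure_mono Ioo_subset_Ioc_self)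
  rw [← measure_cdf (gaussianReal 0 1), StieltjesFunction.measure_Ioc] at hpos
  simpa using hpos

lemma continuous_cdf_gaussian : Continuous (cdf (gaussianReal 0 1)) := by
  have := nullSingletonClass_gaussianReal (μ := 0) (v := 1) one_ne_zero
  refine continuous_iff_continuousAt.2 fun x => ?_
  have h0 : gaussianReal 0 1 {x} = 0 := measure_singleton x
  rw [← measure_cdf (gaussianReal 0 1), StieltjesFunction.measure_singleton] at h0
  -- a null singleton means that the left limit is attained; right continuity is built in
  have hle := (cdf (gaussianReal 0 1)).mono.leftLim_le (le_refl x)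
  have heq : Function.leftLim (cdf (gaussianReal 0 1)) x = cdf (gaussianReal 0 1) x :=
    le_antisymm hle (by simpa using h0)
  rw [(cdf (gaussianReal 0 1)).mono.continuousAt_iff_leftLim_eq_rightLim, heq,
    StieltjesFunction.rightLim_eq]

lemma exists_cdf_eq {p : ℝ} (h0 : 0 < p) (h1 : p < 1) :
    ∃ t, cdf (gaussianReal 0 1) t = p := by
  obtain ⟨a, ha⟩ := ((tendsto_cdf_atBot (gaussianReal 0 1)).eventually_lt_const h0).exists
  obtain ⟨b, hb⟩ := ((tendsto_cdf_atTop (gaussianReal 0 1)).eventually_const_lt h1).exists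
  exact mem_range_of_exists_le_of_exists_ge continuous_cdf_gaussian ⟨a, ha.le⟩ ⟨b, hb.le⟩

lemma VaR_eq {p t : ℝ} (ht : cdf (gaussianReal 0 1) t = p) :
    VaR (gaussianReal 0 1) id p = t := by
  have hset : {u : ℝ | p ≤ ((gaussianReal 0 1) {ω | id ω ≤ u}).toReal} = Ici t := by
    ext u
    have : ((gaussianReal 0 1) {ω | id ω ≤ u}).toReal = cdf (gaussianReal 0 1) u := by
      rw [cdf_eq_real]; rfl
    rw [mem_ofPred_eq, this, ← ht, strictMono_cdf_gaussian.le_iff_le, mem_Ici]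
  rw [VaR, hset, csInf_Ici]

/-- With `s = P (Y > t)`, the Rockafellar–Uryasev objective `γ ↦ s γ + E (Y - γ)⁺` is minimal
at `t`. -/
lemma objective_min (t γ : ℝ) :
    (1 - cdf (gaussianReal 0 1) t) * t + ∫ x, max (x - t) 0 ∂(gaussianReal 0 1) ≤
      (1 - cdf (gaussianReal 0 1) t) * γ + ∫ x, max (x - γ) 0 ∂(gaussianReal 0 1) := by
  have hs : 1 - cdf (gaussianReal 0 1) t = (gaussianReal 0 1).real (Ioi t) := by
    rw [cdf_eq_real, ← compl_Iic, probReal_compl_eq_one_sub measurableSet_Iic]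
  have hint : Integrable ((Ioi t).indicator fun _ : ℝ => t - γ) (gaussianReal 0 1) :=
    (integrable_const _).indicator measurableSet_Ioi
  -- pointwise subgradient inequality `(x - γ)⁺ ≥ (x - t)⁺ + (t - γ) 1_{x > t}`
  have hle : ∫ x, (max (x - t) 0 + (Ioi t).indicator (fun _ : ℝ => t - γ) x) ∂(gaussianReal 0 1)
      ≤ ∫ x, max (x - γ) 0 ∂(gaussianReal 0 1) := by
    refine integral_mono ((integrable_posPart t).add hint) (integrable_posPart γ) fun x => ?_
    by_cases hx : t < x
    · have h1 : max (x - t) 0 = x - t := max_eq_left (by linarith)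
      have h2 := le_max_left (x - γ) 0
      simp only [indicator, mem_Ioi, hx, if_true, h1]
      linarith
    · have h1 : max (x - t) 0 = 0 := max_eq_right (by linarith)
      have h2 := le_max_right (x - γ) 0
      simp only [indicator, mem_Ioi, hx, if_false, h1]
      linarith
  rw [integral_add (integrable_posPart t) hint, integral_indicator_const _ measurableSet_Ioi,
    ← hs, smul_eq_mul] at hle
  linarith

lemma mul_CVaR_eq {s t : ℝ} (hs : 0 < s) (ht : cdf (gaussianReal 0 1) t = 1 - s) :
    s * CVaR (gaussianReal 0 1) id (1 - s) =
      s * t + ∫ x, max (x - t) 0 ∂(gaussianReal 0 1) := by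
  have hmin : ∀ γ : ℝ, t + s⁻¹ * ∫ x, max (x - t) 0 ∂(gaussianReal 0 1) ≤
      γ + s⁻¹ * ∫ x, max (x - γ) 0 ∂(gaussianReal 0 1) := fun γ => by
    have h := objective_min t γ
    rw [ht, sub_sub_cancel] at h
    have h' := mul_le_mul_of_nonneg_left h (inv_nonneg.2 hs.le)
    rwa [mul_add, mul_add, inv_mul_cancel_left₀ hs.ne', inv_mul_cancel_left₀ hs.ne'] at h'
  have hval : CVaR (gaussianReal 0 1) id (1 - s) =
      t + s⁻¹ * ∫ x, max (x - t) 0 ∂(gaussianReal 0 1) := by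
    simp only [CVaR, sub_sub_cancel, id]
    exact le_antisymm
      (ciInf_le ⟨_, by rintro _ ⟨γ, rfl⟩; exact hmin γ⟩ t) (le_ciInf hmin)
  rw [hval, mul_add, mul_inv_cancel_left₀ hs.ne']

/-- The supergradient inequality: the `1 - s` quantile `t` is a supergradient at `s` of the concave
function `s ↦ s * CVaR_{1-s}(Y)`. -/
lemma mul_CVaR_le {s s' t : ℝ} (hs : 0 < s) (hs' : 0 < s') (hs'1 : s' < 1)
    (ht : cdf (gaussianReal 0 1) t = 1 - s) :
    s' * CVaR (gaussianReal 0 1) id (1 - s') ≤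
      s * CVaR (gaussianReal 0 1) id (1 - s) + (s' - s) * t := by
  obtain ⟨t', ht'⟩ := exists_cdf_eq (p := 1 - s') (by linarith) (by linarith)
  rw [mul_CVaR_eq hs ht, mul_CVaR_eq hs' ht']
  have h := objective_min t' t
  rw [ht', sub_sub_cancel] at h
  linarith

/-- Remark: asymptotics of `c_p` as the Wasserstein ball shrinks.
For `ε ∈ (0, 1/2]`, `c_p(δ)` decreases to `VaR_{1−ε}(Y)` as `δ ↓ 0`; in particular
`lim_{δ→0⁺} c_p(δ) = VaR_{1−ε}(Y)`. -/
theorem stmt7 (ε : ℝ) (hε : 0 < ε) (hε' : ε ≤ 1 / 2) :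
    MonotoneOn (fun δ => cpConst δ ε) (Set.Ioi (0 : ℝ)) ∧
    (∀ δ : ℝ, 0 < δ → VaR (gaussianReal 0 1) id (1 - ε) ≤ cpConst δ ε) ∧
    Tendsto (fun δ => cpConst δ ε) (nhdsWithin 0 (Set.Ioi 0))
      (nhds (VaR (gaussianReal 0 1) id (1 - ε))) := by
  obtain ⟨q, hq⟩ := exists_cdf_eq (p := 1 - ε) (by linarith) (by linarith)
  rw [VaR_eq hq]
  have hlow : ∀ δ : ℝ, 0 < δ → ∀ ε' ∈ Ioo (0 : ℝ) ε,
      q ≤ (δ + ε * CVaR (gaussianReal 0 1) id (1 - ε)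
        - ε' * CVaR (gaussianReal 0 1) id (1 - ε')) / (ε - ε') := by
    intro δ hδ ε' h
    have h1 := mul_CVaR_le hε h.1 (by linarith [h.2]) hq
    rw [le_div_iff₀ (by linarith [h.2])]
    linarith
  have hbdd : ∀ δ : ℝ, 0 < δ → BddBelow {r : ℝ | ∃ ε' ∈ Set.Ioo (0 : ℝ) ε,
      r = (δ + ε * CVaR (gaussianReal 0 1) id (1 - ε)
        - ε' * CVaR (gaussianReal 0 1) id (1 - ε')) / (ε - ε')} := by
    rintro δ hδ
    refine ⟨q, ?_⟩
    rintro r ⟨ε', h, rfl⟩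
    exact hlow δ hδ ε' h
  have hne : ∀ δ : ℝ, {r : ℝ | ∃ ε' ∈ Set.Ioo (0 : ℝ) ε,
      r = (δ + ε * CVaR (gaussianReal 0 1) id (1 - ε)
        - ε' * CVaR (gaussianReal 0 1) id (1 - ε')) / (ε - ε')}.Nonempty :=
    fun δ => ⟨_, ε / 2, ⟨by linarith, by linarith⟩, rfl⟩
  have hge : ∀ δ : ℝ, 0 < δ → q ≤ cpConst δ ε := by
    intro δ hδ
    refine le_csInf (hne δ) ?_
    rintro r ⟨ε', h, rfl⟩
    exact hlow δ hδ ε' h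
  refine ⟨?_, hge, ?_⟩
  · intro δ₁ h₁ δ₂ h₂ h12
    refine le_csInf (hne δ₂) ?_
    rintro r ⟨ε', h, rfl⟩
    refine (csInf_le (hbdd δ₁ h₁) ⟨ε', h, rfl⟩).trans ?_
    have : 0 ≤ ε - ε' := by linarith [h.2]
    gcongr
  · refine tendsto_order.2 ⟨fun a ha => ?_, fun a ha => ?_⟩
    · filter_upwards [self_mem_nhdsWithin] with δ hδ
      exact ha.trans_le (hge δ hδ)
    · obtain ⟨t, hqt, hta⟩ := exists_between ha
      obtain ⟨ε', hε'def⟩ : ∃ ε', ε' = 1 - cdf (gaussianReal 0 1) t := ⟨_, rfl⟩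
      have h0 : 0 < ε' := by
        have := (strictMono_cdf_gaussian (lt_add_one t)).trans_le
          (cdf_le_one (gaussianReal 0 1) (t + 1))
        linarith
      have h1 : ε' < ε := by
        have := strictMono_cdf_gaussian hqt
        linarith
      have hd : 0 < ε - ε' := by linarith
      have hsup := mul_CVaR_le h0 hε (by linarith) (t := t) (by linarith)
      have hsmall : ∀ᶠ δ in nhdsWithin (0 : ℝ) (Ioi 0), δ < (a - t) * (ε - ε') :=
        nhdsWithin_le_nhds (Iio_mem_nhds (mul_pos (by linarith) hd))
      filter_upwards [self_mem_nhdsWithin, hsmall] with δ hδ hδs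
      refine (csInf_le (hbdd δ hδ) ⟨ε', ⟨h0, h1⟩, rfl⟩).trans_lt ?_
      rw [div_lt_iff₀ hd]
      linarith

end
end

section
/- Let ζ be an ℝ^m-valued random vector with an α-concave distribution for some α ≥ −1, and let f(x,ζ) := min_{i ∈ [m]} ( b_i(x) − a_iᵀζ ), where each b_i(x) is affine in x and a_i ∈ ℝ^m. Then for every ε ∈ (0,1), the function x ↦ VaR_{1−ε}( f(x,ζ) ) is concave on ℝⁿ. -/
/-!
The generalized mean dominates the minimum for every exponent, so an `α`-concave probability
measure is quasi-concave. Since `f (x, ζ) = min_i (b_i x - a_i ⬝ ζ)` is jointly concave in `(x, ζ)`,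
the superlevel events satisfy
`s • {f x > p} + t • {f y > q} ⊆ {f (s • x + t • y) > s * p + t * q}`,
and therefore the set of `(x, u)` with `P (f x > u) > ε` is convex. Up to boundary points this set is
the hypograph of the value-at-risk, which is the infimum of a nonempty set bounded below because
a distribution function tends to `0` at `-∞` and to `1` at `+∞`.
-/

open MeasureTheory Set
open scoped Classical Pointwise ENNReal

noncomputable section

/-- The generalized mean `m_α(a, b; θ)`. -/
noncomputable def mAlpha (α : EReal) (a b θ : ℝ) : ℝ :=
  if a = 0 ∨ b = 0 then 0
  else if α = 0 then a ^ θ * b ^ (1 - θ)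
  else if α = ⊤ then max a b
  else if α = ⊥ then min a b
  else (θ * a ^ α.toReal + (1 - θ) * b ^ α.toReal) ^ (1 / α.toReal)

/-- An `α`-concave probability measure. -/
def AlphaConcaveMeasure {E : Type*} [MeasurableSpace E] [AddCommGroup E] [Module ℝ E]
    (α : EReal) (P : Measure E) : Prop :=
  ∀ A B : Set E, MeasurableSet A → MeasurableSet B → ∀ θ : ℝ, 0 ≤ θ → θ ≤ 1 →
    mAlpha α (P A).toReal (P B).toReal θ ≤ (P (θ • A + (1 - θ) • B)).toReal

theorem min_le_mAlpha (α : EReal) {a b θ : ℝ} (ha : 0 < a) (hb : 0 < b) (h0 : 0 ≤ θ)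
    (h1 : θ ≤ 1) : min a b ≤ mAlpha α a b θ := by
  have hc : 0 < min a b := lt_min ha hb
  have hca : min a b ≤ a := min_le_left _ _
  have hcb : min a b ≤ b := min_le_right _ _
  have h1' : 0 ≤ 1 - θ := by linarith
  unfold mAlpha
  rw [if_neg (by simp [ha.ne', hb.ne'])]
  split_ifs with hz ht hbot
  · calc min a b = min a b ^ θ * min a b ^ (1 - θ) := by
          rw [← Real.rpow_add hc]; simp
      _ ≤ a ^ θ * b ^ (1 - θ) := by gcongr
  · exact hca.trans (le_max_left _ _)
  · exact le_rfl
  · have hp : α.toReal ≠ 0 := by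
      rw [Ne, EReal.toReal_eq_zero_iff]; tauto
    generalize α.toReal = p at hp
    set c := min a b
    have hcp : (c ^ p) ^ (1 / p) = c := by
      rw [← Real.rpow_mul hc.le, mul_one_div_cancel hp, Real.rpow_one]
    have hcp0 : 0 < c ^ p := Real.rpow_pos_of_pos hc p
    have hap0 : 0 < a ^ p := Real.rpow_pos_of_pos ha p
    have hbp0 : 0 < b ^ p := Real.rpow_pos_of_pos hb p
    rcases lt_or_gt_of_ne hp with hneg | hpos
    -- For `p < 0` both `(· ^ p)` and `(· ^ (1 / p))` reverse inequalities.
    · have hac : a ^ p ≤ c ^ p := Real.rpow_le_rpow_of_nonpos hc hca hneg.le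
      have hbc : b ^ p ≤ c ^ p := Real.rpow_le_rpow_of_nonpos hc hcb hneg.le
      have hmean : 0 < θ * a ^ p + (1 - θ) * b ^ p := by
        rcases h0.eq_or_lt with h | h
        · subst h; simpa using hbp0
        · have := mul_pos h hap0
          have := mul_nonneg h1' hbp0.le
          linarith
      have hle : θ * a ^ p + (1 - θ) * b ^ p ≤ c ^ p := by
        nlinarith [mul_le_mul_of_nonneg_left hac h0, mul_le_mul_of_nonneg_left hbc h1']
      calc c = (c ^ p) ^ (1 / p) := hcp.symm
        _ ≤ _ := Real.rpow_le_rpow_of_nonpos hmean hle (one_div_neg.mpr hneg).le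
    · have hac : c ^ p ≤ a ^ p := Real.rpow_le_rpow hc.le hca hpos.le
      have hbc : c ^ p ≤ b ^ p := Real.rpow_le_rpow hc.le hcb hpos.le
      have hle : c ^ p ≤ θ * a ^ p + (1 - θ) * b ^ p := by
        nlinarith [mul_le_mul_of_nonneg_left hac h0, mul_le_mul_of_nonneg_left hbc h1']
      calc c = (c ^ p) ^ (1 / p) := hcp.symm
        _ ≤ _ := Real.rpow_le_rpow hcp0.le hle (one_div_pos.mpr hpos).le

section VaRSet

variable {Ω : Type*} [MeasurableSpace Ω] (P : Measure Ω) [IsProbabilityMeasure P]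

theorem toReal_le_eq_cdf {X : Ω → ℝ} (hX : Measurable X) (t : ℝ) :
    (P {ω | X ω ≤ t}).toReal = ProbabilityTheory.cdf (P.map X) t := by
  have : IsProbabilityMeasure (P.map X) := Measure.isProbabilityMeasure_map hX.aemeasurable
  rw [ProbabilityTheory.cdf_eq_real, measureReal_def, Measure.map_apply hX measurableSet_Iic]
  rfl

theorem VaR_set_nonempty {X : Ω → ℝ} (hX : Measurable X) {β : ℝ} (hβ : β < 1) :
    {t : ℝ | β ≤ (P {ω | X ω ≤ t}).toReal}.Nonempty := by
  obtain ⟨t, ht⟩ :=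
    ((ProbabilityTheory.tendsto_cdf_atTop (P.map X)).eventually (lt_mem_nhds hβ)).exists
  exact ⟨t, by simpa [toReal_le_eq_cdf P hX] using ht.le⟩

theorem VaR_set_bddBelow {X : Ω → ℝ} (hX : Measurable X) {β : ℝ} (hβ : 0 < β) :
    BddBelow {t : ℝ | β ≤ (P {ω | X ω ≤ t}).toReal} := by
  obtain ⟨t, ht⟩ :=
    ((ProbabilityTheory.tendsto_cdf_atBot (P.map X)).eventually (gt_mem_nhds hβ)).exists
  refine ⟨t, fun u hu => ?_⟩
  by_contra! hut
  have hmono := (ProbabilityTheory.cdf (P.map X)).mono hut.le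
  rw [mem_ofPred_eq, toReal_le_eq_cdf P hX] at hu
  linarith

theorem toReal_le_eq_one_sub {X : Ω → ℝ} (hX : Measurable X) (t : ℝ) :
    (P {ω | X ω ≤ t}).toReal = 1 - (P {ω | t < X ω}).toReal := by
  have h := probReal_compl_eq_one_sub (μ := P)
    (measurableSet_lt measurable_const hX : MeasurableSet {ω | t < X ω})
  rw [measureReal_def, measureReal_def] at h
  rw [← h]
  congr 2
  ext ω
  simp

/-- Below the value-at-risk, the exceedance probability is larger than `ε`. -/
theorem lt_toReal_of_lt_VaR {X : Ω → ℝ} (hX : Measurable X) {ε : ℝ} (hε : ε < 1) {p : ℝ}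
    (hp : p < VaR P X (1 - ε)) : ε < (P {ω | p < X ω}).toReal := by
  have h := notMem_of_lt_csInf hp (VaR_set_bddBelow P hX (by linarith))
  rw [mem_ofPred_eq, toReal_le_eq_one_sub P hX, not_le] at h
  linarith

end VaRSet

/-- Quasi-concavity of `P`, read on superlevel events of functions related by a joint concavity
inequality. -/
theorem lt_toReal_combo {E : Type*} [MeasurableSpace E] [AddCommGroup E] [Module ℝ E]
    {P : Measure E} [IsProbabilityMeasure P] {α : EReal} (hP : AlphaConcaveMeasure α P)
    {X Y Z : E → ℝ} (hX : Measurable X) (hY : Measurable Y) {s t : ℝ} (hs : 0 ≤ s) (ht : 0 ≤ t)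
    (hst : s + t = 1) (hZ : ∀ ζ η, s * X ζ + t * Y η ≤ Z (s • ζ + t • η)) {ε p q : ℝ}
    (hε : 0 < ε) (hp : ε < (P {ζ | p < X ζ}).toReal) (hq : ε < (P {ζ | q < Y ζ}).toReal) :
    ε < (P {ζ | s * p + t * q < Z ζ}).toReal := by
  obtain rfl : t = 1 - s := by linarith
  have hsub : s • {ζ | p < X ζ} + (1 - s) • {ζ | q < Y ζ} ⊆ {ζ | s * p + (1 - s) * q < Z ζ} := by
    rintro _ ⟨_, ⟨ζ, hζ, rfl⟩, _, ⟨η, hη, rfl⟩, rfl⟩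
    simp only [mem_ofPred_eq] at hζ hη ⊢
    refine lt_of_lt_of_le ?_ (hZ ζ η)
    rcases hs.eq_or_lt with h | h
    · subst h; simpa using hη
    · have := mul_lt_mul_of_pos_left hζ h
      have := mul_le_mul_of_nonneg_left hη.le ht
      linarith
  calc ε < min (P {ζ | p < X ζ}).toReal (P {ζ | q < Y ζ}).toReal := lt_min hp hq
    _ ≤ mAlpha α (P {ζ | p < X ζ}).toReal (P {ζ | q < Y ζ}).toReal s :=
        min_le_mAlpha α (hε.trans hp) (hε.trans hq) hs (by linarith)
    _ ≤ (P (s • {ζ | p < X ζ} + (1 - s) • {ζ | q < Y ζ})).toReal :=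
        hP _ _ (measurableSet_lt measurable_const hX) (measurableSet_lt measurable_const hY) s hs
          (by linarith)
    _ ≤ _ := ENNReal.toReal_mono (measure_ne_top _ _) (measure_mono hsub)

/-- Lemma: concavity of VaR for RHS uncertainty.
If `ζ` has an `α`-concave distribution with `α ≥ −1` and
`f(x,ζ) := min_i (b_i(x) − a_iᵀζ)` with `b` affine, then
`x ↦ VaR_{1−ε}(f(x,ζ))` is concave on `ℝⁿ` for all `ε ∈ (0,1)`. -/
theorem stmt9 {n m : ℕ} (hm : 0 < m)
    (P : Measure (Fin m → ℝ)) [IsProbabilityMeasure P]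
    (α : EReal) (hα : (-1 : EReal) ≤ α) (hP : AlphaConcaveMeasure α P)
    (b : (Fin n → ℝ) →ᵃ[ℝ] (Fin m → ℝ)) (a : Fin m → (Fin m → ℝ))
    (ε : ℝ) (hε : ε ∈ Set.Ioo (0 : ℝ) 1) :
    ConcaveOn ℝ (Set.univ : Set (Fin n → ℝ))
      (fun x => VaR P (fun ζ => ⨅ i : Fin m, (b x i - ∑ j, a i j * ζ j)) (1 - ε)) := by
  obtain ⟨hε0, hε1⟩ := hε
  have : Nonempty (Fin m) := ⟨⟨0, hm⟩⟩
  have hmeas : ∀ x : Fin n → ℝ,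
      Measurable (fun ζ : Fin m → ℝ => ⨅ i : Fin m, (b x i - ∑ j, a i j * ζ j)) := fun x =>
    Measurable.iInf fun i => by fun_prop
  refine ⟨convex_univ, fun x _ y _ s t hs ht hst => ?_⟩
  set f : (Fin n → ℝ) → (Fin m → ℝ) → ℝ :=
    fun x ζ => ⨅ i : Fin m, (b x i - ∑ j, a i j * ζ j) with hf
  have hconc : ∀ ζ η, s * f x ζ + t * f y η ≤ f (s • x + t • y) (s • ζ + t • η) := by
    intro ζ η
    refine le_ciInf fun i => ?_
    have hx : f x ζ ≤ b x i - ∑ j, a i j * ζ j := ciInf_le (finite_range _).bddBelow i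
    have hy : f y η ≤ b y i - ∑ j, a i j * η j := ciInf_le (finite_range _).bddBelow i
    have hb : b (s • x + t • y) = s • b x + t • b y := Convex.combo_affine_apply hst
    have hsum : ∑ j, a i j * (s • ζ + t • η) j
        = s * ∑ j, a i j * ζ j + t * ∑ j, a i j * η j := by
      rw [Finset.mul_sum, Finset.mul_sum, ← Finset.sum_add_distrib]
      refine Finset.sum_congr rfl fun j _ => ?_
      simp only [Pi.add_apply, Pi.smul_apply, smul_eq_mul]
      ring
    rw [hb, hsum]
    simp only [Pi.add_apply, Pi.smul_apply, smul_eq_mul]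
    linarith [mul_le_mul_of_nonneg_left hx hs, mul_le_mul_of_nonneg_left hy ht]
  change s * VaR P (f x) (1 - ε) + t * VaR P (f y) (1 - ε) ≤ VaR P (f (s • x + t • y)) (1 - ε)
  refine le_csInf (VaR_set_nonempty P (hmeas _) (by linarith)) fun u hu => ?_
  by_contra! hlt
  -- Lower both values-at-risk by the gap `δ`, so that the combination of the levels is exactly `u`.
  set δ := s * VaR P (f x) (1 - ε) + t * VaR P (f y) (1 - ε) - u with hδ
  have hδ0 : 0 < δ := by linarith
  have hkey := lt_toReal_combo hP (hmeas x) (hmeas y) hs ht hst hconc hε0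
    (lt_toReal_of_lt_VaR P (hmeas x) hε1 (sub_lt_self _ hδ0))
    (lt_toReal_of_lt_VaR P (hmeas y) hε1 (sub_lt_self _ hδ0))
  have hlevel : s * (VaR P (f x) (1 - ε) - δ) + t * (VaR P (f y) (1 - ε) - δ) = u := by
    linear_combination (-δ) * hst + hδ
  change ε < (P {ζ | s * (VaR P (f x) (1 - ε) - δ) + t * (VaR P (f y) (1 - ε) - δ)
    < f (s • x + t • y) ζ}).toReal at hkey
  rw [hlevel] at hkey
  rw [mem_ofPred_eq, toReal_le_eq_one_sub P (hmeas _)] at hu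
  linarith

end
end

section
/- Suppose f : ℝⁿ × Ξ → ℝ is continuous, ζ follows an α-concave distribution ℙ on Ξ ⊆ ℝ^m, and f(x,ζ) is atomless for every x ∈ ℝⁿ (i.e., ℙ[f(x,ζ) = y] = 0 for all y). Then, for fixed ε ∈ (0,1), the functions ψ(x,t) := ℙ[f(x,ζ) ≥ t] − (1−ε) and φ(x,y) := ∫₀^y ψ(x,t) dt are both continuous on ℝⁿ × ℝ₊. -/
/-!
Write `ψ(x,t) + (1 - ε)` as the integral over `ζ` of the indicator of `{t ≤ f x ζ}`. At a point
`(x₀,t₀)` almost every `ζ` lies in `Ξ` and satisfies `f x₀ ζ ≠ t₀`, by atomlessness; for such `ζ`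
the indicator is locally constant in `(x,t)`, because `x ↦ f x ζ` is continuous. Dominated
convergence, with bound `1`, then gives continuity of `ψ` on all of `ℝⁿ × ℝ` (`continuous_prob`),
and `φ` is a parametric interval integral of a jointly continuous function.
-/

open MeasureTheory Set
open scoped Classical Pointwise ENNReal

noncomputable section

/-- The superlevel sets of `f x` coincide with relatively closed subsets of `Ξ` up to a null set;
neither `Ξ` nor `f x` is assumed measurable. -/
lemma nullMeasurableSet_superlevel {n m : ℕ}
    (Ξ : Set (Fin m → ℝ)) (f : (Fin n → ℝ) → (Fin m → ℝ) → ℝ)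
    (hf : ContinuousOn (fun p : (Fin n → ℝ) × (Fin m → ℝ) => f p.1 p.2)
      ((Set.univ : Set (Fin n → ℝ)) ×ˢ Ξ))
    (P : Measure (Fin m → ℝ)) (hΞ : P Ξᶜ = 0) (x : Fin n → ℝ) (t : ℝ) :
    NullMeasurableSet {ζ | t ≤ f x ζ} P := by
  have hΞn : NullMeasurableSet Ξ P := (NullMeasurableSet.of_null hΞ).of_compl
  have hx : ContinuousOn (f x) Ξ :=
    hf.comp (f := fun ζ => (x, ζ)) (by fun_prop) (fun ζ hζ => ⟨mem_univ _, hζ⟩)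
  obtain ⟨u, hu, huΞ⟩ := continuousOn_iff_isClosed.1 hx (Ici t) isClosed_Ici
  have h1 : NullMeasurableSet (f x ⁻¹' Ici t ∩ Ξ) P := by
    rw [huΞ]
    exact hu.measurableSet.nullMeasurableSet.inter hΞn
  refine h1.congr ?_
  have hae : ∀ᵐ ζ ∂P, ζ ∈ Ξ := hΞ
  filter_upwards [hae] with ζ hζ
  exact propext ⟨fun h => h.1, fun h => ⟨h, hζ⟩⟩

lemma continuous_prob {n m : ℕ}
    (Ξ : Set (Fin m → ℝ)) (f : (Fin n → ℝ) → (Fin m → ℝ) → ℝ)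
    (hf : ContinuousOn (fun p : (Fin n → ℝ) × (Fin m → ℝ) => f p.1 p.2)
      ((Set.univ : Set (Fin n → ℝ)) ×ˢ Ξ))
    (P : Measure (Fin m → ℝ)) [IsProbabilityMeasure P] (hΞ : P Ξᶜ = 0)
    (hatomless : ∀ x : Fin n → ℝ, ∀ y : ℝ, P {ζ | f x ζ = y} = 0) :
    Continuous (fun p : (Fin n → ℝ) × ℝ => (P {ζ | p.2 ≤ f p.1 ζ}).toReal) := by
  have hmeas := nullMeasurableSet_superlevel Ξ f hf P hΞ
  have hint : (fun p : (Fin n → ℝ) × ℝ => (P {ζ | p.2 ≤ f p.1 ζ}).toReal) =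
      fun p => ∫ ζ, {ζ | p.2 ≤ f p.1 ζ}.indicator (fun _ => (1 : ℝ)) ζ ∂P := by
    funext p
    rw [integral_indicator₀ (hmeas p.1 p.2)]
    simp [Measure.real]
  rw [hint, continuous_iff_continuousAt]
  rintro ⟨x₀, t₀⟩
  refine continuousAt_of_dominated (bound := fun _ => 1) ?_ ?_ (integrable_const _) ?_
  · exact .of_forall fun p => (aestronglyMeasurable_const).indicator₀ (hmeas p.1 p.2)
  · refine .of_forall fun p => .of_forall fun ζ => ?_
    by_cases h : p.2 ≤ f p.1 ζ <;> simp [indicator, h]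
  · have hae : ∀ᵐ ζ ∂P, ζ ∈ Ξ := hΞ
    have hne : ∀ᵐ ζ ∂P, f x₀ ζ ≠ t₀ := by
      rw [ae_iff]
      simpa using hatomless x₀ t₀
    filter_upwards [hae, hne] with ζ hζ hζne
    have hc : Continuous fun p : (Fin n → ℝ) × ℝ => f p.1 ζ :=
      hf.comp_continuous (f := fun p : (Fin n → ℝ) × ℝ => (p.1, ζ)) (by fun_prop)
        (fun p => ⟨mem_univ _, hζ⟩)
    rcases lt_or_gt_of_ne hζne with h | h
    · have hev := hc.continuousAt.eventually_lt (x₀ := (x₀, t₀)) continuous_snd.continuousAt h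
      refine (continuousAt_const (y := (0 : ℝ))).congr ?_
      filter_upwards [hev] with p hp
      simp [indicator, not_le.2 hp]
    · have hev := continuous_snd.continuousAt.eventually_lt (x₀ := (x₀, t₀)) hc.continuousAt h
      refine (continuousAt_const (y := (1 : ℝ))).congr ?_
      filter_upwards [hev] with p hp
      simp [indicator, hp.le]

/-- Lemma: continuity of probability functions.
If `f` is continuous, `ζ ∼ ℙ` with `ℙ` an `α`-concave distribution supported on `Ξ`,
and `f(x,ζ)` is atomless for each `x`, then
`ψ(x,t) := ℙ[f(x,ζ) ≥ t] − (1−ε)` and `φ(x,y) := ∫₀^y ψ(x,t) dt` are continuous on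
`ℝⁿ × ℝ₊`. -/
theorem stmt10 {n m : ℕ}
    (Ξ : Set (Fin m → ℝ)) (f : (Fin n → ℝ) → (Fin m → ℝ) → ℝ)
    (hf : ContinuousOn (fun p : (Fin n → ℝ) × (Fin m → ℝ) => f p.1 p.2)
      ((Set.univ : Set (Fin n → ℝ)) ×ˢ Ξ))
    (P : Measure (Fin m → ℝ)) [IsProbabilityMeasure P] (hΞ : P Ξᶜ = 0)
    (α : EReal) (hP : AlphaConcaveMeasure α P)
    (hatomless : ∀ x : Fin n → ℝ, ∀ y : ℝ, P {ζ | f x ζ = y} = 0)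
    (ε : ℝ) (hε : ε ∈ Set.Ioo (0 : ℝ) 1) :
    ContinuousOn
      (fun p : (Fin n → ℝ) × ℝ => (P {ζ | p.2 ≤ f p.1 ζ}).toReal - (1 - ε))
      ((Set.univ : Set (Fin n → ℝ)) ×ˢ Set.Ici (0 : ℝ)) ∧
    ContinuousOn
      (fun p : (Fin n → ℝ) × ℝ =>
        ∫ t in (0 : ℝ)..p.2, ((P {ζ | t ≤ f p.1 ζ}).toReal - (1 - ε)))
      ((Set.univ : Set (Fin n → ℝ)) ×ˢ Set.Ici (0 : ℝ)) := by
  have hψ := (continuous_prob Ξ f hf P hΞ hatomless).sub (continuous_const (y := 1 - ε))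
  refine ⟨hψ.continuousOn, Continuous.continuousOn ?_⟩
  exact intervalIntegral.continuous_parametric_intervalIntegral_of_continuous
    (f := fun (p : (Fin n → ℝ) × ℝ) t => (P {ζ | t ≤ f p.1 ζ}).toReal - (1 - ε))
    (hψ.comp (by fun_prop : Continuous fun q : ((Fin n → ℝ) × ℝ) × ℝ => (q.1.1, q.2)))
    continuous_snd

end
end

section
/- Let f(x,ζ) := min_{i ∈ [m]} ( b_i(x) − a_iᵀζ ) with b_i affine and ‖a_i‖_* = 1, let ζ follow ℙ, ε ∈ (0,1), and for y ≥ 0 define φ(x,y) := ∫₀^y ( ℙ[f(x,ζ) ≥ t] − (1−ε) ) dt. If ℙ is α-concave with α ≥ −1, then: (i) φ is α₁*-concave on dom φ := { (x,y) ∈ X × ℝ₊ : ℙ[f(x,ζ) ≥ y] ≥ 1−ε }, where α₁* := α/(1+α) if α > −1 and α₁* := −∞ if α = −1; (ii) dom φ is closed; and (iii) for δ > 0, the pair of constraints δ ≤ ∫₀^{VaR_ε(f(x,ζ))} ( ℙ[f(x,ζ) ≥ t] − (1−ε) ) dt and VaR_ε(f(x,ζ)) ≥ 0 is equivalent to δ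 ≤ max_{y ≥ 0} φ(x,y). -/
/-!
Write `G x t = ℙ[f(x, ζ) ≥ t]`, a nonincreasing function of `t`, and `c = 1 - ε`.

**Concavity.** Joint concavity of `f` turns `α`-concavity of the measure into
`G xθ (θ s + (1 - θ) t) ≥ m_α(G x₀ s, G x₁ t; θ)` (`pMean_prob_le`). For `α ≤ 1` power means are
superadditive (`pMean_add_const_le`), so the same inequality holds for `G - c`. For `α > 1`
superadditivity fails, but such a measure gives half-spaces only the values `0` and `1`
(`halfspace_zero_one`), so that `G - c` equals `ε` wherever `G` is positive. Let `M₀`, `M₁` be the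
values of `G x₀ - c`, `G x₁ - c` at `0`, which are their maxima, and `K = m_α(M₀, M₁; θ)`. By
homogeneity of the mean, the superlevel set of `G xθ - c` at height `l K` contains the Minkowski
combination of the superlevel sets at heights `l M₀`, `l M₁`. These are intervals starting
at `0`, and the layer-cake formula gives
`∫ (G xθ - c) ≥ K (θ I₀ / M₀ + (1 - θ) I₁ / M₁)` (`combo_integral_le`), where `I₀`, `I₁` are the
integrals at the two end points. Hölder's inequality for power means (`pMean_mul_le`) bounds the
right-hand side below by the mean of `I₀`, `I₁` of order `α / (1 + α)`.

**Closedness.** `(x, y) ↦ G x y` is upper semicontinuous, by continuity of the measure along the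
`limsup` of the events (`isClosed_prob_ge`).

**Value-at-risk.** `G x t - c` is nonnegative for `t < VaR` and nonpositive for `t > VaR`, so the
primitive `φ(x, ·)` is maximal at `VaR` when `VaR ≥ 0` and is nonpositive on `[0, ∞)` otherwise
(`le_iSup_integral_iff`).
-/

open MeasureTheory Set
open scoped Classical Pointwise ENNReal

noncomputable section

/-- A nonnegative function `g` is `α`-concave on a set `D`. -/
def AlphaConcaveOn {E : Type*} [AddCommGroup E] [Module ℝ E]
    (α : EReal) (D : Set E) (g : E → ℝ) : Prop :=
  ∀ u ∈ D, ∀ v ∈ D, ∀ θ : ℝ, 0 ≤ θ → θ ≤ 1 →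
    mAlpha α (g u) (g v) θ ≤ g (θ • u + (1 - θ) • v)

/-- The dual norm `‖a‖_* := sup { aᵀv : ‖v‖ ≤ 1 }`. -/
noncomputable def dualNorm {k : ℕ} (nrm : (Fin k → ℝ) → ℝ) (a : Fin k → ℝ) : ℝ :=
  sSup {r : ℝ | ∃ v : Fin k → ℝ, nrm v ≤ 1 ∧ r = ∑ j, a j * v j}


/-! ### Power means -/

/-- The power mean of order `α` with weights `θ`, `1 - θ`: the generalized mean `mAlpha` for a
real order and positive arguments. -/
def pMean (α a b θ : ℝ) : ℝ :=
  if α = 0 then a ^ θ * b ^ (1 - θ) else (θ * a ^ α + (1 - θ) * b ^ α) ^ α⁻¹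

lemma combo_pos {a b θ : ℝ} (ha : 0 < a) (hb : 0 < b) (h0 : 0 ≤ θ) (h1 : θ ≤ 1) :
    0 < θ * a + (1 - θ) * b := by
  rcases h0.eq_or_lt with rfl | h
  · simpa using hb
  · have := mul_pos h ha
    have := mul_nonneg (sub_nonneg.2 h1) hb.le
    linarith

section PowerMean

variable {α a b θ : ℝ}

lemma pMean_pos (ha : 0 < a) (hb : 0 < b) (h0 : 0 ≤ θ) (h1 : θ ≤ 1) : 0 < pMean α a b θ := by
  unfold pMean
  split_ifs
  · positivity
  · exact Real.rpow_pos_of_pos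
      (combo_pos (Real.rpow_pos_of_pos ha _) (Real.rpow_pos_of_pos hb _) h0 h1) _

lemma pMean_rpow (hα : α ≠ 0) (ha : 0 < a) (hb : 0 < b) (h0 : 0 ≤ θ) (h1 : θ ≤ 1) :
    pMean α a b θ ^ α = θ * a ^ α + (1 - θ) * b ^ α := by
  unfold pMean
  rw [if_neg hα, Real.rpow_inv_rpow (combo_pos (Real.rpow_pos_of_pos ha _)
    (Real.rpow_pos_of_pos hb _) h0 h1).le hα]

lemma le_pMean_of_pos {T : ℝ} (hα : 0 < α) (hT : 0 < T) (ha : 0 < a) (hb : 0 < b)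
    (h0 : 0 ≤ θ) (h1 : θ ≤ 1) (h : T ^ α ≤ θ * a ^ α + (1 - θ) * b ^ α) :
    T ≤ pMean α a b θ := by
  rw [← pMean_rpow hα.ne' ha hb h0 h1] at h
  exact (Real.rpow_le_rpow_iff hT.le (pMean_pos ha hb h0 h1).le hα).1 h

lemma le_pMean_of_neg {T : ℝ} (hα : α < 0) (hT : 0 < T) (ha : 0 < a) (hb : 0 < b)
    (h0 : 0 ≤ θ) (h1 : θ ≤ 1) (h : θ * a ^ α + (1 - θ) * b ^ α ≤ T ^ α) :
    T ≤ pMean α a b θ := by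
  rw [← pMean_rpow hα.ne ha hb h0 h1] at h
  exact (Real.rpow_le_rpow_iff_of_neg (pMean_pos ha hb h0 h1) hT hα).1 h

lemma pMean_self (ha : 0 < a) : pMean α a a θ = a := by
  unfold pMean
  split_ifs with h
  · rw [← Real.rpow_add ha]; simp
  · rw [← add_mul, add_sub_cancel, one_mul, Real.rpow_rpow_inv ha.le h]

lemma pMean_mono {a' b' : ℝ} (ha : 0 < a) (hb : 0 < b) (haa : a ≤ a') (hbb : b ≤ b')
    (h0 : 0 ≤ θ) (h1 : θ ≤ 1) : pMean α a b θ ≤ pMean α a' b' θ := by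
  have ha' := ha.trans_le haa
  have hb' := hb.trans_le hbb
  have h1' : 0 ≤ 1 - θ := sub_nonneg.2 h1
  rcases lt_trichotomy α 0 with h | h | h
  · apply le_pMean_of_neg h (pMean_pos ha hb h0 h1) ha' hb' h0 h1
    rw [pMean_rpow h.ne ha hb h0 h1]
    gcongr 1
    · exact mul_le_mul_of_nonneg_left (Real.rpow_le_rpow_of_nonpos ha haa h.le) h0
    · exact mul_le_mul_of_nonneg_left (Real.rpow_le_rpow_of_nonpos hb hbb h.le) h1'
  · simp only [pMean, h, if_true]
    gcongr
  · apply le_pMean_of_pos h (pMean_pos ha hb h0 h1) ha' hb' h0 h1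
    rw [pMean_rpow h.ne' ha hb h0 h1]
    gcongr

lemma pMean_smul {k : ℝ} (hk : 0 < k) (ha : 0 < a) (hb : 0 < b) (h0 : 0 ≤ θ) (h1 : θ ≤ 1) :
    pMean α (k * a) (k * b) θ = k * pMean α a b θ := by
  unfold pMean
  split_ifs with h
  · rw [Real.mul_rpow hk.le ha.le, Real.mul_rpow hk.le hb.le]
    have : k ^ θ * k ^ (1 - θ) = k := by rw [← Real.rpow_add hk]; simp
    calc _ = (k ^ θ * k ^ (1 - θ)) * (a ^ θ * b ^ (1 - θ)) := by ring
      _ = _ := by rw [this]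
  · rw [Real.mul_rpow hk.le ha.le, Real.mul_rpow hk.le hb.le]
    have hA := combo_pos (Real.rpow_pos_of_pos ha α) (Real.rpow_pos_of_pos hb α) h0 h1
    have : θ * (k ^ α * a ^ α) + (1 - θ) * (k ^ α * b ^ α)
        = k ^ α * (θ * a ^ α + (1 - θ) * b ^ α) := by ring
    rw [this, Real.mul_rpow (by positivity) hA.le, Real.rpow_rpow_inv hk.le h]

/-- Convexity of `x ↦ x ^ α` on the positive reals for `α ≤ 0`, by applying the weighted AM-GM
inequality to `x, y` and then to `x ^ α, y ^ α`. -/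
lemma rpow_combo_le_of_nonpos {x y s t : ℝ} (hα : α ≤ 0) (hx : 0 < x) (hy : 0 < y)
    (hs : 0 ≤ s) (ht : 0 ≤ t) (hst : s + t = 1) :
    (s * x + t * y) ^ α ≤ s * x ^ α + t * y ^ α := by
  have h1 := Real.geom_mean_le_arith_mean2_weighted hs ht hx.le hy.le hst
  have h2 := Real.geom_mean_le_arith_mean2_weighted hs ht (Real.rpow_pos_of_pos hx α).le
    (Real.rpow_pos_of_pos hy α).le hst
  refine (Real.rpow_le_rpow_of_nonpos (by positivity) h1 hα).trans (le_trans (le_of_eq ?_) h2)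
  rw [Real.mul_rpow (by positivity) (by positivity), ← Real.rpow_mul hx.le, ← Real.rpow_mul hy.le,
    ← Real.rpow_mul hx.le, ← Real.rpow_mul hy.le, mul_comm s, mul_comm t]

/-- For `α ≤ 1` the power mean is superadditive; here one summand is the constant vector
`(c, c)`. This is what allows the constant `1 - ε` to be subtracted from the probabilities. -/
lemma pMean_add_const_le {c : ℝ} (hα : α ≤ 1) (ha : 0 < a) (hb : 0 < b) (hc : 0 < c)
    (h0 : 0 ≤ θ) (h1 : θ ≤ 1) :
    pMean α a b θ + c ≤ pMean α (a + c) (b + c) θ := by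
  have h1' : 0 ≤ 1 - θ := sub_nonneg.2 h1
  set M := pMean α a b θ with hM
  have hMp : 0 < M := pMean_pos ha hb h0 h1
  have hS : 0 < M + c := by positivity
  -- `(a + c) / (M + c)` is a convex combination of `a / M` and `1`.
  have hcomb : ∀ x, x + c = (M + c) * (M / (M + c) * (x / M) + c / (M + c) * 1) := by
    intro x; field_simp
  have hw : M / (M + c) + c / (M + c) = 1 := by field_simp
  have hnorm : α ≠ 0 → θ * (a / M) ^ α + (1 - θ) * (b / M) ^ α = 1 := by
    intro hne
    rw [Real.div_rpow ha.le hMp.le, Real.div_rpow hb.le hMp.le, ← mul_div_assoc, ← mul_div_assoc,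
      ← add_div, ← pMean_rpow hne ha hb h0 h1, div_self (Real.rpow_pos_of_pos hMp α).ne']
  have hpull : ∀ x, 0 < x → (x + c) ^ α = (M + c) ^ α *
      (M / (M + c) * (x / M) + c / (M + c) * 1) ^ α := by
    intro x hx
    rw [← Real.mul_rpow hS.le (by positivity), ← hcomb x]
  have hSα := Real.rpow_pos_of_pos hS α
  rcases lt_trichotomy α 0 with h | h | h
  · apply le_pMean_of_neg h hS (by positivity) (by positivity) h0 h1
    rw [hpull a ha, hpull b hb]
    have ea := rpow_combo_le_of_nonpos h.le (div_pos ha hMp) one_pos (div_pos hMp hS).le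
      (div_pos hc hS).le hw
    have eb := rpow_combo_le_of_nonpos h.le (div_pos hb hMp) one_pos (div_pos hMp hS).le
      (div_pos hc hS).le hw
    rw [Real.one_rpow] at ea eb
    have key : θ * (M / (M + c) * (a / M) + c / (M + c) * 1) ^ α +
        (1 - θ) * (M / (M + c) * (b / M) + c / (M + c) * 1) ^ α ≤ 1 := by
      have e1 := mul_le_mul_of_nonneg_left ea h0
      have e2 := mul_le_mul_of_nonneg_left eb h1'
      have := hnorm h.ne
      calc _ ≤ _ := add_le_add e1 e2
        _ = M / (M + c) * (θ * (a / M) ^ α + (1 - θ) * (b / M) ^ α) + c / (M + c) := by ring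
        _ = 1 := by rw [this, mul_one, hw]
    nlinarith
  · have e1 := Real.geom_mean_le_arith_mean2_weighted h0 h1' (p₁ := a / (a + c))
      (p₂ := b / (b + c)) (by positivity) (by positivity) (by ring)
    have e2 := Real.geom_mean_le_arith_mean2_weighted h0 h1' (p₁ := c / (a + c))
      (p₂ := c / (b + c)) (by positivity) (by positivity) (by ring)
    have ea : a / (a + c) + c / (a + c) = 1 := by field_simp
    have eb : b / (b + c) + c / (b + c) = 1 := by field_simp
    have hcc : c ^ θ * c ^ (1 - θ) = c := by rw [← Real.rpow_add hc]; simp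
    rw [hM]
    simp only [pMean, h, if_true]
    rw [Real.div_rpow, Real.div_rpow, div_mul_div_comm] at e1 e2 <;> try positivity
    rw [hcc] at e2
    have hD : 0 < (a + c) ^ θ * (b + c) ^ (1 - θ) := by positivity
    have : (a ^ θ * b ^ (1 - θ) + c) / ((a + c) ^ θ * (b + c) ^ (1 - θ)) ≤ 1 := by
      rw [add_div]
      nlinarith
    exact (div_le_one hD).1 this
  · apply le_pMean_of_pos h hS (by positivity) (by positivity) h0 h1
    rw [hpull a ha, hpull b hb]
    have hcv := (Real.concaveOn_rpow h.le hα).2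
    have ea := hcv (x := a / M) (y := 1) (div_pos ha hMp).le (mem_Ici.2 zero_le_one) (div_pos hMp hS).le
      (div_pos hc hS).le hw
    have eb := hcv (x := b / M) (y := 1) (div_pos hb hMp).le (mem_Ici.2 zero_le_one) (div_pos hMp hS).le
      (div_pos hc hS).le hw
    simp only [smul_eq_mul, Real.one_rpow] at ea eb
    have key : 1 ≤ θ * (M / (M + c) * (a / M) + c / (M + c) * 1) ^ α +
        (1 - θ) * (M / (M + c) * (b / M) + c / (M + c) * 1) ^ α := by
      have e1 := mul_le_mul_of_nonneg_left ea h0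
      have e2 := mul_le_mul_of_nonneg_left eb h1'
      have := hnorm h.ne'
      calc 1 = M / (M + c) * (θ * (a / M) ^ α + (1 - θ) * (b / M) ^ α) + c / (M + c) := by
            rw [this, mul_one, hw]
        _ = _ := by ring
        _ ≤ _ := add_le_add e1 e2
    nlinarith

/-- Weighted AM-GM with weights `p`, `1 - p`, where `p ∈ [0, 1]`. -/
lemma rpow_mul_rpow_le {x y p : ℝ} (hx : 0 < x) (hy : 0 < y) (hp0 : 0 ≤ p) (hp1 : p ≤ 1) :
    x ^ p * y ^ (1 - p) ≤ p * x + (1 - p) * y :=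
  Real.geom_mean_le_arith_mean2_weighted hp0 (sub_nonneg.2 hp1) hx.le hy.le (by ring)

/-- The AM-GM inequality is reversed for exponents `p ≥ 1` (Bernoulli's inequality). -/
lemma le_rpow_mul_rpow {x y p : ℝ} (hx : 0 < x) (hy : 0 < y) (hp : 1 ≤ p) :
    p * x + (1 - p) * y ≤ x ^ p * y ^ (1 - p) := by
  have hb := one_add_mul_self_le_rpow_one_add (s := x / y - 1) (p := p)
    (by have := div_pos hx hy; linarith) hp
  rw [add_sub_cancel, Real.div_rpow hx.le hy.le] at hb
  rw [Real.rpow_sub hy, Real.rpow_one]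
  have := mul_le_mul_of_nonneg_left hb hy.le
  calc _ = y * (1 + p * (x / y - 1)) := by field_simp; ring
    _ ≤ _ := this
    _ = _ := by ring

/-- Hölder's inequality for power means: the mean of order `α / (1 + α)` of the products
`a * r`, `b * t` is at most the mean of order `α` of `a, b` times the mean of order `1` of
`r, t`. -/
lemma pMean_mul_le {r t : ℝ} (hα : -1 < α) (ha : 0 < a) (hb : 0 < b) (hr : 0 < r) (ht : 0 < t)
    (h0 : 0 ≤ θ) (h1 : θ ≤ 1) :
    pMean (α / (1 + α)) (a * r) (b * t) θ ≤ pMean α a b θ * (θ * r + (1 - θ) * t) := by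
  have h1' : 0 ≤ 1 - θ := sub_nonneg.2 h1
  have hR := combo_pos hr ht h0 h1
  set R := θ * r + (1 - θ) * t with hRdef
  have hMp : 0 < pMean α a b θ := pMean_pos ha hb h0 h1
  have hα1 : 0 < 1 + α := by linarith
  rcases eq_or_ne α 0 with h | h
  · simp only [pMean, h, zero_div, if_true]
    rw [Real.mul_rpow ha.le hr.le, Real.mul_rpow hb.le ht.le]
    have := Real.geom_mean_le_arith_mean2_weighted h0 h1' hr.le ht.le (by ring)
    calc _ = (a ^ θ * b ^ (1 - θ)) * (r ^ θ * t ^ (1 - θ)) := by ring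
      _ ≤ _ := by gcongr
  -- With `p = 1 / (1 + α)` one has `(a * r) ^ (α / (1 + α)) = (a ^ α) ^ p * r ^ (1 - p)`.
  set s := α / (1 + α) with hs
  set p := 1 / (1 + α) with hp
  have hsp : s = 1 - p := by rw [hs, hp]; field_simp; ring
  have hαp : α * p = s := by rw [hs, hp]; field_simp
  have hs0 : s ≠ 0 := div_ne_zero h hα1.ne'
  set M := pMean α a b θ with hM
  have hMα : M ^ α = θ * a ^ α + (1 - θ) * b ^ α := pMean_rpow h ha hb h0 h1
  have hMαp := Real.rpow_pos_of_pos hMp α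
  have hMRs := Real.rpow_pos_of_pos (mul_pos hMp hR) s
  have hsplit : ∀ x z, 0 < x → 0 < z → (x * z) ^ s =
      (M * R) ^ s * ((x ^ α / M ^ α) ^ p * (z / R) ^ (1 - p)) := by
    intro x z hx hz
    rw [← Real.div_rpow hx.le hMp.le, ← Real.rpow_mul (by positivity), hαp, ← hsp,
      ← Real.mul_rpow (by positivity) (by positivity), ← Real.mul_rpow (by positivity)
      (by positivity)]
    congr 1
    field_simp
  have hsum : θ * (p * (a ^ α / M ^ α) + (1 - p) * (r / R)) +
      (1 - θ) * (p * (b ^ α / M ^ α) + (1 - p) * (t / R)) = 1 := by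
    calc _ = p * ((θ * a ^ α + (1 - θ) * b ^ α) / M ^ α) +
          (1 - p) * ((θ * r + (1 - θ) * t) / R) := by ring
      _ = 1 := by rw [← hMα, ← hRdef, div_self hMαp.ne', div_self hR.ne']; ring
  have hax := div_pos (Real.rpow_pos_of_pos ha α) hMαp
  have hbx := div_pos (Real.rpow_pos_of_pos hb α) hMαp
  have hpm := pMean_rpow hs0 (mul_pos ha hr) (mul_pos hb ht) h0 h1
  rw [hsplit a r ha hr, hsplit b t hb ht] at hpm
  have hNp := pMean_pos (α := s) (mul_pos ha hr) (mul_pos hb ht) h0 h1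
  rcases lt_or_gt_of_ne h with hneg | hpos
  · have hp1 : 1 ≤ p := by rw [hp, le_div_iff₀ hα1]; linarith
    have hsneg : s < 0 := div_neg_of_neg_of_pos hneg hα1
    have e1 := mul_le_mul_of_nonneg_left (le_rpow_mul_rpow hax (div_pos hr hR) hp1) h0
    have e2 := mul_le_mul_of_nonneg_left (le_rpow_mul_rpow hbx (div_pos ht hR) hp1) h1'
    refine (Real.rpow_le_rpow_iff_of_neg (mul_pos hMp hR) hNp hsneg).1 ?_
    rw [hpm]
    nlinarith
  · have hp1 : p ≤ 1 := by rw [hp, div_le_iff₀ hα1]; linarith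
    have hp0 : 0 ≤ p := by positivity
    have hspos : 0 < s := div_pos hpos hα1
    have e1 := mul_le_mul_of_nonneg_left (rpow_mul_rpow_le hax (div_pos hr hR) hp0 hp1) h0
    have e2 := mul_le_mul_of_nonneg_left (rpow_mul_rpow_le hbx (div_pos ht hR) hp0 hp1) h1'
    refine (Real.rpow_le_rpow_iff hNp.le (mul_pos hMp hR).le hspos).1 ?_
    rw [hpm]
    nlinarith

/-- The limiting case `α = -1` of `pMean_mul_le`, where the order `α / (1 + α)` becomes `-∞`. -/
lemma min_le_pMean_neg_one_mul {r t : ℝ} (ha : 0 < a) (hb : 0 < b)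
    (h0 : 0 ≤ θ) (h1 : θ ≤ 1) :
    min (a * r) (b * t) ≤ pMean (-1) a b θ * (θ * r + (1 - θ) * t) := by
  have h1' : 0 ≤ 1 - θ := sub_nonneg.2 h1
  have hA := combo_pos (inv_pos.2 ha) (inv_pos.2 hb) h0 h1
  have hM : pMean (-1) a b θ = (θ * a⁻¹ + (1 - θ) * b⁻¹)⁻¹ := by
    simp only [pMean, if_neg (by norm_num : (-1 : ℝ) ≠ 0), Real.rpow_neg_one, inv_neg, inv_one]
  rw [hM, inv_mul_eq_div, le_div_iff₀ hA]
  set k := min (a * r) (b * t)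
  have e1 : k * a⁻¹ ≤ r := by
    rw [← div_eq_mul_inv, div_le_iff₀ ha, mul_comm r]; exact min_le_left _ _
  have e2 : k * b⁻¹ ≤ t := by
    rw [← div_eq_mul_inv, div_le_iff₀ hb, mul_comm t]; exact min_le_right _ _
  calc _ = θ * (k * a⁻¹) + (1 - θ) * (k * b⁻¹) := by ring
    _ ≤ _ := by gcongr

end PowerMean

/-! ### A one-dimensional Borell–Brascamp–Lieb inequality -/

/-- Layer-cake formula for a nonincreasing function on `[0, y]`, after division by `M`. -/
lemma ofReal_integral_div_eq {h : ℝ → ℝ} (hh : Antitone h) {y M : ℝ} (hy : 0 ≤ y) (hM : 0 < M)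
    (hn : 0 ≤ h y) :
    ENNReal.ofReal ((∫ t in (0 : ℝ)..y, h t) / M) =
      ∫⁻ l in Ioi (0 : ℝ), volume {t | t ∈ Icc 0 y ∧ l * M ≤ h t} := by
  have hint : IntervalIntegrable h volume 0 y := (hh.antitoneOn _).intervalIntegrable
  have hnn : 0 ≤ᵐ[volume.restrict (Icc 0 y)] fun t => h t / M := by
    filter_upwards [ae_restrict_mem measurableSet_Icc] with t ht
    exact div_nonneg (hn.trans (hh ht.2)) hM.le
  have hmeas : Measurable fun t => h t / M := hh.measurable.div_const M
  have hI : IntegrableOn (fun t => h t / M) (Icc 0 y) := by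
    rw [integrableOn_Icc_iff_integrableOn_Ioc]
    exact ((intervalIntegrable_iff_integrableOn_Ioc_of_le hy).1 hint).div_const M
  rw [← intervalIntegral.integral_div, intervalIntegral.integral_of_le hy,
    ← integral_Icc_eq_integral_Ioc, ofReal_integral_eq_lintegral_ofReal hI hnn,
    lintegral_eq_lintegral_meas_le _ hnn hmeas.aemeasurable]
  refine lintegral_congr fun l => ?_
  rw [Measure.restrict_apply (measurableSet_le measurable_const hmeas)]
  congr 1
  ext t
  simp only [mem_inter_iff, mem_ofPred_eq, le_div_iff₀ hM]
  exact and_comm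

/-- One-dimensional Brunn–Minkowski inequality for bounded intervals `A`, `B` with left end point
`0 ∈ A ∩ B`. The superlevel sets in `[0, y]` of a nonincreasing function are of this kind. -/
lemma volume_combo_le {A B C : Set ℝ} {θ : ℝ} (h0 : 0 ≤ θ) (h1 : θ ≤ 1)
    (hA0 : (0 : ℝ) ∈ A) (hB0 : (0 : ℝ) ∈ B) (hA : BddAbove A) (hB : BddAbove B)
    (hAn : ∀ t ∈ A, 0 ≤ t) (hBn : ∀ t ∈ B, 0 ≤ t)
    (hAl : ∀ t ∈ A, ∀ s, 0 ≤ s → s ≤ t → s ∈ A) (hBl : ∀ t ∈ B, ∀ s, 0 ≤ s → s ≤ t → s ∈ B)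
    (hC : ∀ s ∈ A, ∀ t ∈ B, θ * s + (1 - θ) * t ∈ C) :
    ENNReal.ofReal θ * volume A + ENNReal.ofReal (1 - θ) * volume B ≤ volume C := by
  have h1' : 0 ≤ 1 - θ := sub_nonneg.2 h1
  have vol : ∀ S : Set ℝ, BddAbove S → (∀ t ∈ S, 0 ≤ t) → volume S ≤ ENNReal.ofReal (sSup S) := by
    intro S hS hSn
    have : S ⊆ Icc 0 (sSup S) := fun t ht => ⟨hSn t ht, le_csSup hS ht⟩
    simpa using measure_mono (μ := volume) this
  have scale : ∀ S : Set ℝ, (0 : ℝ) ∈ S → BddAbove S →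
      (∀ t ∈ S, ∀ s, 0 ≤ s → s ≤ t → s ∈ S) → ∀ c : ℝ, 0 ≤ c → c < 1 → c * sSup S ∈ S := by
    intro S hS0 hS hSl c hc0 hc1
    have hnn : 0 ≤ sSup S := le_csSup hS hS0
    rcases hnn.eq_or_lt with h | h
    · rw [← h, mul_zero]; exact hS0
    · obtain ⟨e, he, hlt⟩ := exists_lt_of_lt_csSup ⟨0, hS0⟩
        (show c * sSup S < sSup S by nlinarith)
      exact hSl e he _ (by positivity) hlt.le
  have hAs : 0 ≤ sSup A := le_csSup hA hA0
  have hBs : 0 ≤ sSup B := le_csSup hB hB0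
  set L := θ * sSup A + (1 - θ) * sSup B with hL
  have hsub : Ico 0 L ⊆ C := by
    rintro z ⟨hz0, hzL⟩
    have hLp : 0 < L := hz0.trans_lt hzL
    have hc0 : 0 ≤ z / L := by positivity
    have hc1 : z / L < 1 := (div_lt_one hLp).2 hzL
    have := hC _ (scale A hA0 hA hAl _ hc0 hc1) _ (scale B hB0 hB hBl _ hc0 hc1)
    have e : θ * (z / L * sSup A) + (1 - θ) * (z / L * sSup B) = z := by
      calc _ = z / L * L := by rw [hL]; ring
        _ = z := by field_simp
    rwa [e] at this
  calc _ ≤ ENNReal.ofReal θ * ENNReal.ofReal (sSup A) +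
        ENNReal.ofReal (1 - θ) * ENNReal.ofReal (sSup B) := by
        gcongr
        · exact vol A hA hAn
        · exact vol B hB hBn
    _ = ENNReal.ofReal L := by
        rw [← ENNReal.ofReal_mul h0, ← ENNReal.ofReal_mul h1', ← ENNReal.ofReal_add]
        · positivity
        · positivity
    _ = volume (Ico 0 L) := by simp
    _ ≤ volume C := measure_mono hsub

/-- Comparison of superlevel sets: if at every relative height `l ∈ (0, 1]` the superlevel set of
`H` at `l * K` contains the Minkowski combination of those of `h₀`, `h₁` at `l * h₀ 0`, `l * h₁ 0`,
then the integrals relative to the maximal heights are superadditive accordingly. -/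
lemma combo_integral_le {h₀ h₁ H : ℝ → ℝ} (hh₀ : Antitone h₀) (hh₁ : Antitone h₁)
    (hH : Antitone H) {y₀ y₁ θ K : ℝ} (hθ0 : 0 ≤ θ) (hθ1 : θ ≤ 1) (hy₀ : 0 ≤ y₀) (hy₁ : 0 ≤ y₁)
    (hM₀ : 0 < h₀ 0) (hM₁ : 0 < h₁ 0) (hK : 0 < K) (hn₀ : 0 ≤ h₀ y₀) (hn₁ : 0 ≤ h₁ y₁)
    (hn : 0 ≤ H (θ * y₀ + (1 - θ) * y₁))
    (key : ∀ l, 0 < l → l ≤ 1 → ∀ s, 0 ≤ s → s ≤ y₀ → ∀ t, 0 ≤ t → t ≤ y₁ →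
      l * h₀ 0 ≤ h₀ s → l * h₁ 0 ≤ h₁ t → l * K ≤ H (θ * s + (1 - θ) * t)) :
    K * (θ * ((∫ t in (0 : ℝ)..y₀, h₀ t) / h₀ 0) + (1 - θ) * ((∫ t in (0 : ℝ)..y₁, h₁ t) / h₁ 0)) ≤
      ∫ t in (0 : ℝ)..(θ * y₀ + (1 - θ) * y₁), H t := by
  have h1' : 0 ≤ 1 - θ := sub_nonneg.2 hθ1
  set y := θ * y₀ + (1 - θ) * y₁ with hy
  have hy0 : 0 ≤ y := by positivity
  have nn : ∀ (h : ℝ → ℝ), Antitone h → ∀ y, 0 ≤ y → 0 ≤ h y → 0 ≤ ∫ t in (0 : ℝ)..y, h t :=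
    fun h hh y hy hn => intervalIntegral.integral_nonneg hy fun t ht => hn.trans (hh ht.2)
  have n₀ := div_nonneg (nn h₀ hh₀ y₀ hy₀ hn₀) hM₀.le
  have n₁ := div_nonneg (nn h₁ hh₁ y₁ hy₁ hn₁) hM₁.le
  have n := div_nonneg (nn H hH y hy0 hn) hK.le
  rw [mul_comm, ← le_div_iff₀ hK, ← ENNReal.ofReal_le_ofReal_iff n,
    ENNReal.ofReal_add (mul_nonneg hθ0 n₀) (mul_nonneg h1' n₁), ENNReal.ofReal_mul hθ0,
    ENNReal.ofReal_mul h1', ofReal_integral_div_eq hh₀ hy₀ hM₀ hn₀,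
    ofReal_integral_div_eq hh₁ hy₁ hM₁ hn₁, ofReal_integral_div_eq hH hy0 hK hn]
  refine (add_le_add (lintegral_const_mul_le _ _) (lintegral_const_mul_le _ _)).trans
    ((le_lintegral_add _ _).trans ?_)
  refine lintegral_mono_ae ?_
  filter_upwards [ae_restrict_mem measurableSet_Ioi] with l hl
  have hl : 0 < l := hl
  rcases le_or_gt l 1 with hl1 | hl1
  · apply volume_combo_le hθ0 hθ1
    · exact ⟨⟨le_rfl, hy₀⟩, by nlinarith⟩
    · exact ⟨⟨le_rfl, hy₁⟩, by nlinarith⟩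
    · exact ⟨y₀, fun t ht => ht.1.2⟩
    · exact ⟨y₁, fun t ht => ht.1.2⟩
    · exact fun t ht => ht.1.1
    · exact fun t ht => ht.1.1
    · exact fun t ht s hs hst => ⟨⟨hs, hst.trans ht.1.2⟩, ht.2.trans (hh₀ hst)⟩
    · exact fun t ht s hs hst => ⟨⟨hs, hst.trans ht.1.2⟩, ht.2.trans (hh₁ hst)⟩
    · rintro s ⟨⟨hs0, hsy⟩, hs⟩ t ⟨⟨ht0, hty⟩, ht⟩
      refine ⟨⟨by positivity, ?_⟩, key l hl hl1 s hs0 hsy t ht0 hty hs ht⟩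
      rw [hy]
      gcongr
  · -- Above the maximal height the superlevel sets are empty.
    have e : ∀ (h : ℝ → ℝ), Antitone h → 0 < h 0 → ∀ y,
        {t | t ∈ Icc 0 y ∧ l * h 0 ≤ h t} = ∅ := by
      intro h hh hp y
      ext t
      simp only [mem_ofPred_eq, mem_empty_iff_false, iff_false, not_and, not_le]
      intro ht
      have := hh ht.1
      nlinarith
    rw [e h₀ hh₀ hM₀, e h₁ hh₁ hM₁]
    simp

/-! ### Concave measures of order greater than one -/

lemma mAlpha_eq_pMean {α a b θ : ℝ} (ha : a ≠ 0) (hb : b ≠ 0) :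
    mAlpha (α : EReal) a b θ = pMean α a b θ := by
  simp [mAlpha, pMean, ha, hb]

lemma half_add_lt_pMean {α a b : ℝ} (hα : 1 < α) (ha : 0 < a) (hb : 0 < b) (hab : a ≠ b) :
    (a + b) / 2 < pMean α a b (1 / 2) := by
  have hsc := (strictConvexOn_rpow hα).2
  have h := hsc (mem_Ici.2 ha.le) (mem_Ici.2 hb.le) hab
    (show (0 : ℝ) < 1 / 2 by norm_num) (show (0 : ℝ) < 1 / 2 by norm_num) (by norm_num)
  simp only [smul_eq_mul] at h
  have h2 := pMean_rpow (α := α) (θ := 1 / 2) (by linarith) ha hb (by norm_num) (by norm_num)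
  have h3 : (1 : ℝ) - 1 / 2 = 1 / 2 := by norm_num
  rw [h3] at h2
  rw [← h2] at h
  have := (Real.rpow_lt_rpow_iff (by positivity)
    (pMean_pos ha hb (by norm_num) (by norm_num)).le (by linarith)).1 h
  linarith

open ProbabilityTheory Filter Topology in
/-- A measure that is `α`-concave with `α > 1` gives every half-space measure `0` or `1`.
Both the distribution function `F` of the linear form and `1 - F` satisfy a strict form of midpoint
concavity, so `F` takes at most one value in `(0, 1)`; a jump from that value to `1` would
contradict `α`-concavity and right-continuity. -/
lemma halfspace_zero_one {m : ℕ} (P : Measure (Fin m → ℝ)) [IsProbabilityMeasure P] {α : ℝ}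
    (hα : 1 < α) (hP : AlphaConcaveMeasure (α : EReal) P) (ℓ : (Fin m → ℝ) →ₗ[ℝ] ℝ) (t : ℝ) :
    P {ζ | ℓ ζ ≤ t} = 0 ∨ P {ζ | ℓ ζ ≤ t} = 1 := by
  have hℓ : Measurable ℓ := ℓ.continuous_of_finiteDimensional.measurable
  set μ := P.map ℓ with hμ
  have : IsProbabilityMeasure μ := Measure.isProbabilityMeasure_map hℓ.aemeasurable
  set F := cdf μ with hFdef
  have hF : ∀ s, F s = (P {ζ | ℓ ζ ≤ s}).toReal := by
    intro s
    rw [hFdef, cdf_eq_real, Measure.real, hμ, Measure.map_apply hℓ measurableSet_Iic]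
    rfl
  have hF' : ∀ s, 1 - F s = (P {ζ | s < ℓ ζ}).toReal := by
    intro s
    have : {ζ | s < ℓ ζ} = {ζ | ℓ ζ ≤ s}ᶜ := by ext; simp
    rw [this, prob_compl_eq_one_sub (measurableSet_le hℓ measurable_const),
      ENNReal.toReal_sub_of_le prob_le_one ENNReal.one_ne_top, hF]
    simp
  have hmono : ∀ s t, s ≤ t → F s ≤ F t := fun s t h => monotone_cdf μ h
  have hle : ∀ s, F s ≤ 1 := cdf_le_one μ
  have hnn : ∀ s, 0 ≤ F s := cdf_nonneg μ
  have c1 : ∀ s t θ, 0 ≤ θ → θ ≤ 1 → 0 < F s → 0 < F t →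
      pMean α (F s) (F t) θ ≤ F (θ * s + (1 - θ) * t) := by
    intro s t θ h0 h1 hs ht
    rw [← mAlpha_eq_pMean hs.ne' ht.ne', hF s, hF t, hF]
    refine (hP _ _ (measurableSet_le hℓ measurable_const) (measurableSet_le hℓ measurable_const)
      θ h0 h1).trans ?_
    refine ENNReal.toReal_mono (measure_ne_top _ _) (measure_mono ?_)
    rintro _ ⟨_, ⟨u, hu, rfl⟩, _, ⟨v, hv, rfl⟩, rfl⟩
    simp only [mem_ofPred_eq, map_add, map_smul, smul_eq_mul] at *
    have := sub_nonneg.2 h1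
    gcongr
  have c2 : ∀ s t θ, 0 ≤ θ → θ ≤ 1 → 0 < 1 - F s → 0 < 1 - F t →
      pMean α (1 - F s) (1 - F t) θ ≤ 1 - F (θ * s + (1 - θ) * t) := by
    intro s t θ h0 h1 hs ht
    rw [← mAlpha_eq_pMean hs.ne' ht.ne', hF' s, hF' t, hF']
    refine (hP _ _ (measurableSet_lt measurable_const hℓ) (measurableSet_lt measurable_const hℓ)
      θ h0 h1).trans ?_
    refine ENNReal.toReal_mono (measure_ne_top _ _) (measure_mono ?_)
    rintro _ ⟨_, ⟨u, hu, rfl⟩, _, ⟨v, hv, rfl⟩, rfl⟩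
    simp only [mem_ofPred_eq, map_add, map_smul, smul_eq_mul] at *
    have := combo_pos (sub_pos.2 hu) (sub_pos.2 hv) h0 h1
    linarith
  have step1 : ∀ s t, 0 < F s → F t < 1 → s ≤ t → F s = F t := by
    intro s t hs ht hst
    by_contra hne
    have hm := hmono s t hst
    have a1 := half_add_lt_pMean hα hs (hs.trans_le hm) hne
    have a2 := half_add_lt_pMean hα (a := 1 - F s) (b := 1 - F t) (by linarith) (by linarith)
      (fun h => hne (by linarith))
    have b1 := c1 s t (1 / 2) (by norm_num) (by norm_num) hs (hs.trans_le hm)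
    have b2 := c2 s t (1 / 2) (by norm_num) (by norm_num) (by linarith) (by linarith)
    linarith
  have main : F t = 0 ∨ F t = 1 := by
    by_contra hcon
    push Not at hcon
    have hp0 : 0 < F t := lt_of_le_of_ne (hnn t) (Ne.symm hcon.1)
    have hp1 : F t < 1 := lt_of_le_of_ne (hle t) hcon.2
    obtain ⟨s, hs1, hs2⟩ := (((tendsto_cdf_atTop μ).eventually (lt_mem_nhds hp1)).and
      (eventually_gt_atTop t)).exists
    have hs : F s = 1 := by
      by_contra h
      exact hs1.ne (step1 t s hp0 (lt_of_le_of_ne (hle s) h) hs2.le)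
    have hall : ∀ z, t < z → z ≤ s → F z = 1 := by
      intro z hz1 hz2
      have hst : 0 < s - t := sub_pos.2 hs2
      set θ := (s - z) / (s - t) with hθ
      have h0 : 0 ≤ θ := div_nonneg (sub_nonneg.2 hz2) hst.le
      have h1 : θ < 1 := by rw [hθ, div_lt_one hst]; linarith
      have hz : θ * t + (1 - θ) * s = z := by rw [hθ]; field_simp; ring
      have c := c1 t s θ h0 h1.le hp0 (by rw [hs]; exact one_pos)
      rw [hz, hs] at c
      have hlt : F t < pMean α (F t) 1 θ := by
        refine (Real.rpow_lt_rpow_iff hp0.le (pMean_pos hp0 one_pos h0 h1.le).le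
          (by linarith : 0 < α)).1 ?_
        rw [pMean_rpow (by linarith) hp0 one_pos h0 h1.le, Real.one_rpow]
        have : F t ^ α < 1 := Real.rpow_lt_one hp0.le hp1 (by linarith)
        nlinarith
      by_contra h
      have := step1 t z hp0 (lt_of_le_of_ne (hle z) h) hz1.le
      linarith
    have hlim : Tendsto F (𝓝[>] t) (𝓝 (F t)) :=
      (F.right_continuous t).mono_left (nhdsWithin_mono _ Ioi_subset_Ici_self)
    have hlim' : Tendsto F (𝓝[>] t) (𝓝 1) := by
      refine tendsto_const_nhds.congr' ?_
      filter_upwards [Ioc_mem_nhdsGT hs2] with z hz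
      exact (hall z hz.1 hz.2).symm
    exact hp1.ne (tendsto_nhds_unique hlim hlim')
  rw [hF t] at main
  rcases main with h | h
  · left
    exact ((ENNReal.toReal_eq_zero_iff _).1 h).resolve_right (measure_ne_top _ _)
  · right
    exact (ENNReal.toReal_eq_one_iff _).1 h

/-! ### Value-at-risk and the maximal value of the integral -/

open ProbabilityTheory Filter Topology in
/-- The integrand `ℙ[Z ≥ t] - (1 - ε)` is nonnegative before `VaR_ε(Z)` and nonpositive after it. -/
lemma sign_around_VaR {Ω : Type*} [MeasurableSpace Ω] (P : Measure Ω) [IsProbabilityMeasure P]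
    {Z : Ω → ℝ} (hZ : Measurable Z) {ε : ℝ} (hε : ε ∈ Ioo (0 : ℝ) 1) :
    (∀ t < VaR P Z ε, 0 ≤ (P {ω | t ≤ Z ω}).toReal - (1 - ε)) ∧
      ∀ t, VaR P Z ε < t → (P {ω | t ≤ Z ω}).toReal - (1 - ε) ≤ 0 := by
  set μ := P.map Z with hμ
  have : IsProbabilityMeasure μ := Measure.isProbabilityMeasure_map hZ.aemeasurable
  have hF : ∀ s, cdf μ s = (P {ω | Z ω ≤ s}).toReal := by
    intro s
    rw [cdf_eq_real, Measure.real, hμ, Measure.map_apply hZ measurableSet_Iic]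
    rfl
  have hF' : ∀ s, 1 - cdf μ s = (P {ω | s < Z ω}).toReal := by
    intro s
    have : {ω | s < Z ω} = {ω | Z ω ≤ s}ᶜ := by ext; simp
    rw [this, prob_compl_eq_one_sub (measurableSet_le hZ measurable_const),
      ENNReal.toReal_sub_of_le prob_le_one ENNReal.one_ne_top, hF]
    simp
  have hV : VaR P Z ε = sInf {t | ε ≤ cdf μ t} := by simp only [VaR, hF]
  have hne : {t | ε ≤ cdf μ t}.Nonempty := by
    obtain ⟨s, hs⟩ := ((tendsto_cdf_atTop μ).eventually (lt_mem_nhds hε.2)).exists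
    exact ⟨s, hs.le⟩
  have hbdd : BddBelow {t | ε ≤ cdf μ t} := by
    obtain ⟨s, hs⟩ := ((tendsto_cdf_atBot μ).eventually (gt_mem_nhds hε.1)).exists
    refine ⟨s, fun t ht => ?_⟩
    by_contra hlt
    have h1 := monotone_cdf μ (not_le.1 hlt).le
    have h2 : ε ≤ cdf μ t := ht
    linarith
  rw [hV]
  constructor
  · intro t ht
    have h1 : cdf μ t < ε := not_le.1 fun h => (notMem_of_lt_csInf ht hbdd) h
    have h2 : (P {ω | t < Z ω}).toReal ≤ (P {ω | t ≤ Z ω}).toReal :=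
      ENNReal.toReal_mono (measure_ne_top _ _) (measure_mono fun ω (h : t < Z ω) => h.le)
    rw [← hF'] at h2
    linarith
  · intro t ht
    obtain ⟨s, hs, hst⟩ := exists_lt_of_csInf_lt hne ht
    have h1 : ε ≤ cdf μ s := hs
    have h2 : (P {ω | t ≤ Z ω}).toReal ≤ (P {ω | s < Z ω}).toReal :=
      ENNReal.toReal_mono (measure_ne_top _ _)
        (measure_mono fun ω (h : t ≤ Z ω) => hst.trans_le h)
    rw [← hF'] at h2
    linarith

lemma antitone_tail {Ω : Type*} [MeasurableSpace Ω] (P : Measure Ω) [IsProbabilityMeasure P]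
    (Z : Ω → ℝ) (c : ℝ) : Antitone fun t => (P {ω | t ≤ Z ω}).toReal - c := by
  intro s t hst
  exact sub_le_sub_right (ENNReal.toReal_mono (measure_ne_top _ _)
    (measure_mono fun ω (h : t ≤ Z ω) => hst.trans h)) c

/-- For a nonincreasing integrand `g` that changes sign at `v`, the primitive
`y ↦ ∫₀^y g` on `[0, ∞)` is maximal at `v` if `v ≥ 0` and nonpositive if `v < 0`. In the real-valued
iterated supremum the indices `y < 0` contribute the value `0`, which the value at `y = 0`
attains anyway. -/
lemma le_iSup_integral_iff {g : ℝ → ℝ} (hg : Antitone g) {v δ : ℝ} (hδ : 0 < δ)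
    (h1 : ∀ t < v, 0 ≤ g t) (h2 : ∀ t, v < t → g t ≤ 0) :
    (δ ≤ ∫ t in (0 : ℝ)..v, g t) ∧ 0 ≤ v ↔ δ ≤ ⨆ y ∈ Ici (0 : ℝ), ∫ t in (0 : ℝ)..y, g t := by
  have hint : ∀ p q, IntervalIntegrable g volume p q :=
    fun p q => (hg.antitoneOn _).intervalIntegrable
  have hpos : ∀ p q, p ≤ q → q ≤ v → 0 ≤ ∫ t in p..q, g t := by
    intro p q hpq hq
    rw [intervalIntegral.integral_of_le hpq, integral_Ioc_eq_integral_Ioo]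
    exact setIntegral_nonneg measurableSet_Ioo fun t ht => h1 t (ht.2.trans_le hq)
  have hneg : ∀ p q, p ≤ q → v ≤ p → ∫ t in p..q, g t ≤ 0 := by
    intro p q hpq hp
    rw [intervalIntegral.integral_of_le hpq]
    exact setIntegral_nonpos measurableSet_Ioc fun t ht => h2 t (hp.trans_lt ht.1)
  rcases lt_or_ge v 0 with hv | hv
  · refine ⟨fun h => absurd h.2 (not_le.2 hv), fun h => absurd (h.trans ?_) (not_le.2 hδ)⟩
    exact Real.iSup_le (fun y => Real.iSup_le (fun hy => hneg 0 y hy hv.le) le_rfl) le_rfl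
  · have hmax : ∀ y, 0 ≤ y → ∫ t in (0 : ℝ)..y, g t ≤ ∫ t in (0 : ℝ)..v, g t := by
      intro y hy
      rw [← intervalIntegral.integral_add_adjacent_intervals (hint 0 v) (hint v y)]
      rcases le_total y v with hyv | hyv
      · have := hpos y v hyv le_rfl
        rw [intervalIntegral.integral_symm y v]
        linarith
      · have := hneg v y hyv le_rfl
        linarith
    have hin : ∀ y, ⨆ (_ : y ∈ Ici (0 : ℝ)), ∫ t in (0 : ℝ)..y, g t ≤ ∫ t in (0 : ℝ)..v, g t :=
      fun y => Real.iSup_le (fun hy => hmax y hy) (hpos 0 v hv le_rfl)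
    have hsup : ⨆ y ∈ Ici (0 : ℝ), ∫ t in (0 : ℝ)..y, g t = ∫ t in (0 : ℝ)..v, g t := by
      apply le_antisymm (Real.iSup_le hin (hpos 0 v hv le_rfl))
      have hb : BddAbove (range fun y => ⨆ (_ : y ∈ Ici (0 : ℝ)), ∫ t in (0 : ℝ)..y, g t) :=
        ⟨_, by rintro _ ⟨y, rfl⟩; exact hin y⟩
      have := le_ciSup hb v
      rwa [ciSup_pos (mem_Ici.2 hv)] at this
    rw [hsup]
    exact and_iff_left hv

/-! ### The probability function -/

section Probability

variable {n m : ℕ} (P : Measure (Fin m → ℝ)) [IsProbabilityMeasure P]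
  (b : (Fin n → ℝ) →ᵃ[ℝ] (Fin m → ℝ)) (a : Fin m → (Fin m → ℝ))

lemma le_minForm_iff (hm : 0 < m) (x : Fin n → ℝ) (ζ : Fin m → ℝ) (t : ℝ) :
    t ≤ ⨅ i : Fin m, (b x i - ∑ j, a i j * ζ j) ↔ ∀ i, t ≤ b x i - ∑ j, a i j * ζ j := by
  have : Nonempty (Fin m) := ⟨⟨0, hm⟩⟩
  exact le_ciInf_iff (Set.finite_range _).bddBelow

lemma measurable_minForm (x : Fin n → ℝ) :
    Measurable fun ζ : Fin m → ℝ => ⨅ i : Fin m, (b x i - ∑ j, a i j * ζ j) := by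
  refine Measurable.iInf fun i => ?_
  fun_prop

open Filter Topology in
/-- The set of all `(x, y)` with `ℙ[f(x, ζ) ≥ y] ≥ c` is closed: along a convergent sequence
`p k` of such points, the `limsup` of the events has measure at least `c` and is contained in the
event of the limit point. -/
lemma isClosed_prob_ge (hm : 0 < m) (c : ℝ) :
    IsClosed {p : (Fin n → ℝ) × ℝ |
      c ≤ (P {ζ | p.2 ≤ ⨅ i : Fin m, (b p.1 i - ∑ j, a i j * ζ j)}).toReal} := by
  apply IsSeqClosed.isClosed
  intro p q hp hpq
  have hb : Continuous b := b.continuous_of_finiteDimensional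
  set E : (Fin n → ℝ) × ℝ → Set (Fin m → ℝ) :=
    fun p => {ζ | p.2 ≤ ⨅ i : Fin m, (b p.1 i - ∑ j, a i j * ζ j)} with hE
  have hEm : ∀ p, MeasurableSet (E p) := fun p =>
    measurableSet_le measurable_const (measurable_minForm b a p.1)
  set S : ℕ → Set (Fin m → ℝ) := fun k => ⋃ j ≥ k, E (p j) with hS
  have hSm : ∀ k, MeasurableSet (S k) := fun k =>
    MeasurableSet.iUnion fun j => MeasurableSet.iUnion fun _ => hEm _
  have hSanti : Antitone S := fun k l hkl => by
    apply iUnion_mono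
    intro j
    exact iUnion_mono' fun h => ⟨hkl.trans h, le_rfl⟩
  have hsub : (⋂ k, S k) ⊆ E q := by
    intro ζ hζ
    simp only [hS, mem_iInter, mem_iUnion] at hζ
    have hfreq : ∃ᶠ j in atTop, ζ ∈ E (p j) := by
      rw [frequently_atTop]
      intro k
      obtain ⟨j, hj, h⟩ := hζ k
      exact ⟨j, hj, h⟩
    have hcl : IsClosed {p : (Fin n → ℝ) × ℝ | ζ ∈ E p} := by
      have : {p : (Fin n → ℝ) × ℝ | ζ ∈ E p} =
          ⋂ i, {p | p.2 ≤ b p.1 i - ∑ j, a i j * ζ j} := by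
        ext p
        simp only [hE, mem_ofPred_eq, mem_iInter]
        exact le_minForm_iff b a hm p.1 ζ p.2
      rw [this]
      refine isClosed_iInter fun i => isClosed_le continuous_snd ?_
      exact (((continuous_apply i).comp hb).comp continuous_fst).sub continuous_const
    exact hcl.mem_of_frequently_of_tendsto hfreq hpq
  have hmeas : ENNReal.ofReal c ≤ P (E q) := by
    refine le_trans ?_ (measure_mono hsub)
    rw [hSanti.measure_iInter (fun k => (hSm k).nullMeasurableSet) ⟨0, measure_ne_top _ _⟩]
    refine le_iInf fun k => ?_
    refine le_trans ?_ (measure_mono (show E (p k) ⊆ S k from fun ζ h =>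
      mem_iUnion.2 ⟨k, mem_iUnion.2 ⟨le_rfl, h⟩⟩))
    exact ENNReal.ofReal_le_of_le_toReal (hp k)
  exact (ENNReal.ofReal_le_iff_le_toReal (measure_ne_top _ _)).1 hmeas

/-- Since `f` is jointly concave, `α`-concavity of the measure passes to the probability
`ℙ[f(x, ζ) ≥ t]` as a function of `(x, t)`. -/
lemma pMean_prob_le (hm : 0 < m) {α : ℝ} (hP : AlphaConcaveMeasure (α : EReal) P)
    (x₀ x₁ : Fin n → ℝ) (s t θ : ℝ) (h0 : 0 ≤ θ) (h1 : θ ≤ 1)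
    (hs : 0 < (P {ζ | s ≤ ⨅ i : Fin m, (b x₀ i - ∑ j, a i j * ζ j)}).toReal)
    (ht : 0 < (P {ζ | t ≤ ⨅ i : Fin m, (b x₁ i - ∑ j, a i j * ζ j)}).toReal) :
    pMean α (P {ζ | s ≤ ⨅ i : Fin m, (b x₀ i - ∑ j, a i j * ζ j)}).toReal
        (P {ζ | t ≤ ⨅ i : Fin m, (b x₁ i - ∑ j, a i j * ζ j)}).toReal θ ≤
      (P {ζ | θ * s + (1 - θ) * t ≤
        ⨅ i : Fin m, (b (θ • x₀ + (1 - θ) • x₁) i - ∑ j, a i j * ζ j)}).toReal := by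
  rw [← mAlpha_eq_pMean hs.ne' ht.ne']
  refine (hP _ _ (measurableSet_le measurable_const (measurable_minForm b a x₀))
    (measurableSet_le measurable_const (measurable_minForm b a x₁)) θ h0 h1).trans ?_
  refine ENNReal.toReal_mono (measure_ne_top _ _) (measure_mono ?_)
  rintro _ ⟨_, ⟨u, hu, rfl⟩, _, ⟨v, hv, rfl⟩, rfl⟩
  simp only [mem_ofPred_eq] at hu hv ⊢
  rw [le_minForm_iff b a hm] at hu hv ⊢
  intro i
  have h1' : 0 ≤ 1 - θ := sub_nonneg.2 h1
  have e1 : b (θ • x₀ + (1 - θ) • x₁) i = θ * b x₀ i + (1 - θ) * b x₁ i := by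
    rw [Convex.combo_affine_apply (by ring)]
    simp
  have e2 : ∑ j, a i j * (θ • u + (1 - θ) • v) j
      = θ * ∑ j, a i j * u j + (1 - θ) * ∑ j, a i j * v j := by
    rw [Finset.mul_sum, Finset.mul_sum, ← Finset.sum_add_distrib]
    refine Finset.sum_congr rfl fun j _ => ?_
    simp only [Pi.add_apply, Pi.smul_apply, smul_eq_mul]
    ring
  rw [e1]
  refine le_trans ?_ (le_of_eq (congrArg (fun z => _ - z) e2.symm))
  have := mul_le_mul_of_nonneg_left (hu i) h0
  have := mul_le_mul_of_nonneg_left (hv i) h1'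
  linarith

/-- For `α > 1` the event `f(x, ζ) ≥ t`, an intersection of half-spaces, has probability `0`
or `1`. -/
lemma prob_zero_one (hm : 0 < m) {α : ℝ} (hα : 1 < α)
    (hP : AlphaConcaveMeasure (α : EReal) P) (x : Fin n → ℝ) (t : ℝ)
    (hpos : 0 < (P {ζ | t ≤ ⨅ i : Fin m, (b x i - ∑ j, a i j * ζ j)}).toReal) :
    (P {ζ | t ≤ ⨅ i : Fin m, (b x i - ∑ j, a i j * ζ j)}).toReal = 1 := by
  have hEq : {ζ | t ≤ ⨅ i : Fin m, (b x i - ∑ j, a i j * ζ j)} =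
      ⋂ i, {ζ : Fin m → ℝ | (∑ j, a i j • LinearMap.proj (R := ℝ) (φ := fun _ => ℝ) j :
        (Fin m → ℝ) →ₗ[ℝ] ℝ) ζ ≤ b x i - t} := by
    ext ζ
    simp only [mem_ofPred_eq, mem_iInter]
    rw [le_minForm_iff b a hm]
    refine forall_congr' fun i => ?_
    simp only [LinearMap.sum_apply, LinearMap.smul_apply, LinearMap.proj_apply, smul_eq_mul]
    constructor <;> intro h <;> linarith
  rw [hEq] at hpos ⊢
  have hpos' := (ENNReal.toReal_pos_iff.1 hpos).1
  have hone : ∀ i, P {ζ : Fin m → ℝ | (∑ j, a i j • LinearMap.proj (R := ℝ) (φ := fun _ => ℝ) j :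
        (Fin m → ℝ) →ₗ[ℝ] ℝ) ζ ≤ b x i - t} = 1 := by
    intro i
    refine (halfspace_zero_one P hα hP _ _).resolve_left fun h => ?_
    exact absurd (le_trans (measure_mono (iInter_subset _ i)) h.le) (not_le.2 hpos')
  have hms : ∀ i, MeasurableSet {ζ : Fin m → ℝ |
      (∑ j, a i j • LinearMap.proj (R := ℝ) (φ := fun _ => ℝ) j :
        (Fin m → ℝ) →ₗ[ℝ] ℝ) ζ ≤ b x i - t} := fun i =>
    measurableSet_le (LinearMap.continuous_of_finiteDimensional _).measurable measurable_const
  rw [ENNReal.toReal_eq_one_iff, ← mem_ae_iff_prob_eq_one (MeasurableSet.iInter hms),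
    countable_iInter_mem]
  exact fun i => (mem_ae_iff_prob_eq_one (hms i)).2 (hone i)

end Probability

/-- Proposition: properties of `φ`. If `ℙ` is `α`-concave with
`α ≥ −1`, then (i) `φ` is `α₁*`-concave on `dom φ`, (ii) `dom φ` is closed, and
(iii) the constraints `δ ≤ ∫₀^{VaR_ε(f(x,ζ))}(ℙ[f(x,ζ) ≥ t] − (1−ε)) dt` and
`VaR_ε(f(x,ζ)) ≥ 0` are jointly equivalent to `δ ≤ max_{y ≥ 0} φ(x,y)`. -/
theorem stmt12 {n m : ℕ} (hm : 0 < m)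
    (nrm : (Fin m → ℝ) → ℝ)
    (hnrm_nonneg : ∀ v, 0 ≤ nrm v)
    (hnrm_add : ∀ u v, nrm (u + v) ≤ nrm u + nrm v)
    (hnrm_smul : ∀ (c : ℝ) v, nrm (c • v) = |c| * nrm v)
    (hnrm_eq_zero : ∀ v, nrm v = 0 → v = 0)
    (P : Measure (Fin m → ℝ)) [IsProbabilityMeasure P]
    (α : ℝ) (hα : -1 ≤ α) (hP : AlphaConcaveMeasure (α : EReal) P)
    (X : Set (Fin n → ℝ)) (hXconv : Convex ℝ X) (hXcl : IsClosed X)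
    (b : (Fin n → ℝ) →ᵃ[ℝ] (Fin m → ℝ)) (a : Fin m → (Fin m → ℝ))
    (ha : ∀ i, dualNorm nrm (a i) = 1)
    (ε : ℝ) (hε : ε ∈ Set.Ioo (0 : ℝ) 1)
    (f : (Fin n → ℝ) → (Fin m → ℝ) → ℝ)
    (hf : f = fun x ζ => ⨅ i : Fin m, (b x i - ∑ j, a i j * ζ j))
    (φ : (Fin n → ℝ) × ℝ → ℝ)
    (hφ : φ = fun p => ∫ t in (0 : ℝ)..p.2, ((P {ζ | t ≤ f p.1 ζ}).toReal - (1 - ε)))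
    (domφ : Set ((Fin n → ℝ) × ℝ))
    (hdom : domφ = {p | p.1 ∈ X ∧ 0 ≤ p.2 ∧ 1 - ε ≤ (P {ζ | p.2 ≤ f p.1 ζ}).toReal})
    (αs : EReal)
    (hαs : αs = if α = -1 then (⊥ : EReal) else ((α / (1 + α) : ℝ) : EReal))
    (δ : ℝ) (hδ : 0 < δ) :
    AlphaConcaveOn αs domφ φ ∧
    IsClosed domφ ∧
    (∀ x ∈ X,
      ((δ ≤ ∫ t in (0 : ℝ)..(VaR P (f x) ε), ((P {ζ | t ≤ f x ζ}).toReal - (1 - ε)) ∧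
          0 ≤ VaR P (f x) ε) ↔
        δ ≤ ⨆ y ∈ Set.Ici (0 : ℝ), φ (x, y))) := by
  subst hf hφ hdom
  have hc : 0 < 1 - ε := by linarith [hε.2]
  refine ⟨?_, ?_, ?_⟩
  · rintro ⟨x₀, y₀⟩ ⟨-, hy₀, hd₀⟩ ⟨x₁, y₁⟩ ⟨-, hy₁, hd₁⟩ θ hθ0 hθ1
    simp only at hy₀ hd₀ hy₁ hd₁
    simp only [Prod.smul_mk, Prod.mk_add_mk, smul_eq_mul]
    have hθ1' : 0 ≤ 1 - θ := sub_nonneg.2 hθ1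
    -- `G x t` is the probability that `f x ζ ≥ t`.
    set G : (Fin n → ℝ) → ℝ → ℝ :=
      fun x t => (P {ζ | t ≤ ⨅ i : Fin m, (b x i - ∑ j, a i j * ζ j)}).toReal with hG
    have hanti : ∀ x, Antitone fun t => G x t - (1 - ε) := fun x => antitone_tail P _ _
    have hle1 : ∀ x t, G x t ≤ 1 := fun x t =>
      ENNReal.toReal_le_of_le_ofReal zero_le_one (by simpa using prob_le_one)
    set I₀ := ∫ t in (0 : ℝ)..y₀, (G x₀ t - (1 - ε)) with hI₀
    set I₁ := ∫ t in (0 : ℝ)..y₁, (G x₁ t - (1 - ε)) with hI₁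
    set xθ := θ • x₀ + (1 - θ) • x₁ with hxθ
    have hmean : ∀ s t, 0 < G x₀ s → 0 < G x₁ t →
        pMean α (G x₀ s) (G x₁ t) θ ≤ G xθ (θ * s + (1 - θ) * t) :=
      fun s t hs ht => pMean_prob_le P b a hm hP x₀ x₁ s t θ hθ0 hθ1 hs ht
    have hdθ : 1 - ε ≤ G xθ (θ * y₀ + (1 - θ) * y₁) := by
      refine le_trans ?_ (hmean y₀ y₁ (hc.trans_le hd₀) (hc.trans_le hd₁))
      have := pMean_mono (α := α) hc hc hd₀ hd₁ hθ0 hθ1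
      rwa [pMean_self hc] at this
    have nn : ∀ x y, 0 ≤ y → 1 - ε ≤ G x y → 0 ≤ ∫ t in (0 : ℝ)..y, (G x t - (1 - ε)) :=
      fun x y hy h => intervalIntegral.integral_nonneg hy fun t ht =>
        (sub_nonneg.2 h).trans (hanti x ht.2)
    have nθ := nn xθ (θ * y₀ + (1 - θ) * y₁) (by positivity) hdθ
    have n₀ : 0 ≤ I₀ := nn x₀ y₀ hy₀ hd₀
    have n₁ : 0 ≤ I₁ := nn x₁ y₁ hy₁ hd₁
    by_cases hz : I₀ = 0 ∨ I₁ = 0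
    · simpa only [mAlpha, if_pos hz] using nθ
    push Not at hz
    have p₀ : 0 < I₀ := lt_of_le_of_ne n₀ (Ne.symm hz.1)
    have p₁ : 0 < I₁ := lt_of_le_of_ne n₁ (Ne.symm hz.2)
    -- A positive integral of a nonincreasing function forces a positive initial value.
    have init : ∀ x y, 0 ≤ y → 0 < ∫ t in (0 : ℝ)..y, (G x t - (1 - ε)) →
        0 < G x 0 - (1 - ε) := by
      intro x y hy hp
      by_contra hcon
      refine absurd hp (not_lt.2 ?_)
      rw [intervalIntegral.integral_of_le hy]
      exact setIntegral_nonpos measurableSet_Ioc fun t ht =>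
        (hanti x ht.1.le).trans (not_lt.1 hcon)
    have m₀ := init x₀ y₀ hy₀ p₀
    have m₁ := init x₁ y₁ hy₁ p₁
    set M₀ := G x₀ 0 - (1 - ε) with hM₀
    set M₁ := G x₁ 0 - (1 - ε) with hM₁
    have hK : 0 < pMean α M₀ M₁ θ := pMean_pos m₀ m₁ hθ0 hθ1
    have main : pMean α M₀ M₁ θ * (θ * (I₀ / M₀) + (1 - θ) * (I₁ / M₁)) ≤
        ∫ t in (0 : ℝ)..(θ * y₀ + (1 - θ) * y₁), (G xθ t - (1 - ε)) := by
      refine combo_integral_le (hanti x₀) (hanti x₁) (hanti xθ) hθ0 hθ1 hy₀ hy₁ m₀ m₁ hK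
        (sub_nonneg.2 hd₀) (sub_nonneg.2 hd₁) (sub_nonneg.2 hdθ) ?_
      intro l hl hl1 s hs0 hsy t ht0 hty hs ht
      rw [← hM₀] at hs
      rw [← hM₁] at ht
      have q₀ : 0 < l * M₀ := by positivity
      have q₁ : 0 < l * M₁ := by positivity
      have hm' := hmean s t (by linarith) (by linarith)
      rcases le_or_gt α 1 with h | h
      · have e1 := pMean_add_const_le h q₀ q₁ hc hθ0 hθ1
        have e2 := pMean_mono (α := α) (a := l * M₀ + (1 - ε)) (b := l * M₁ + (1 - ε))
          (a' := G x₀ s) (b' := G x₁ t) (by linarith) (by linarith)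
          (by linarith) (by linarith) hθ0 hθ1
        rw [pMean_smul hl m₀ m₁ hθ0 hθ1] at e1
        linarith
      · -- All the probabilities involved are equal to `1`.
        have z : ∀ x t, 0 < G x t → G x t = 1 := fun x t => prob_zero_one P b a hm h hP x t
        rw [z x₀ s (by linarith), z x₁ t (by linarith), pMean_self one_pos] at hm'
        have e := pMean_mono (α := α) m₀ m₁
          (show M₀ ≤ ε by linarith [hle1 x₀ 0]) (show M₁ ≤ ε by linarith [hle1 x₁ 0]) hθ0 hθ1
        rw [pMean_self hε.1] at e
        nlinarith
    refine le_trans ?_ main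
    have r₀ : M₀ * (I₀ / M₀) = I₀ := by field_simp
    have r₁ : M₁ * (I₁ / M₁) = I₁ := by field_simp
    rcases hα.eq_or_lt with h | h
    · have := min_le_pMean_neg_one_mul (r := I₀ / M₀) (t := I₁ / M₁) m₀ m₁ hθ0 hθ1
      rw [r₀, r₁] at this
      rw [hαs, if_pos h.symm, ← h]
      simpa [mAlpha, hz.1, hz.2] using this
    · have := pMean_mul_le h m₀ m₁ (div_pos p₀ m₀) (div_pos p₁ m₁) hθ0 hθ1
      rw [r₀, r₁] at this
      rw [hαs, if_neg h.ne', mAlpha_eq_pMean hz.1 hz.2]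
      exact this
  · exact (hXcl.preimage continuous_fst).inter
      ((isClosed_le continuous_const continuous_snd).inter (isClosed_prob_ge P b a hm (1 - ε)))
  · intro x _
    obtain ⟨s1, s2⟩ := sign_around_VaR P (measurable_minForm b a x) hε
    exact le_iSup_integral_iff (antitone_tail P _ _) hδ s1 s2

end
end
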